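/- If G is a 4-connected graph then either its circumference satisfies c ≥ 4δ − 2κ, or G has a dominating cycle. -/

import Mathlib

open SimpleGraph

variable {V : Type*}

/-- `G` is `k`-connected: more than `k` vertices and removing fewer than `k`
vertices leaves a connected graph. -/
def KConnected (G : SimpleGraph V) [Fintype V] (k : ℕ) : Prop :=
  k < Fintype.card V ∧
    ∀ S : Finset V, S.card < k → (G.induce ((↑S : Set V)ᶜ)).Connected

/-- vertex connectivity `κ`. -/
noncomputable def connectivity (G : SimpleGraph V) [Fintype V] : ℕ :=
  sSup {k | KConnected G k}

/-- independence number `α`. -/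
noncomputable def indepNumber (G : SimpleGraph V) [Fintype V] : ℕ :=
  sSup {k | ∃ s : Finset V, (∀ u ∈ s, ∀ v ∈ s, ¬ G.Adj u v) ∧ s.card = k}

/-- circumference `c`: length of a longest cycle. -/
noncomputable def circumference (G : SimpleGraph V) [Fintype V] : ℕ :=
  sSup {n | ∃ (v : V) (w : G.Walk v v), w.IsCycle ∧ w.length = n}

/-- `w` is a longest cycle of `G`. -/
def IsLongestCycle {G : SimpleGraph V} {v : V} (w : G.Walk v v) : Prop :=
  w.IsCycle ∧ ∀ (u : V) (w' : G.Walk u u), w'.IsCycle → w'.length ≤ w.length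

/-- dominating cycle: every edge has an endpoint on the cycle. -/
def IsDominatingCycle {G : SimpleGraph V} {v : V} (w : G.Walk v v) : Prop :=
  w.IsCycle ∧ ∀ x y, G.Adj x y → x ∈ w.support ∨ y ∈ w.support

/-- generalized cycle of length `n` with vertex set `W`: single vertices are
cycles of length 1, edges are cycles of length 2. -/
def ExtCycle (G : SimpleGraph V) (W : Set V) (n : ℕ) : Prop :=
  (n = 1 ∧ ∃ v : V, W = {v}) ∨
  (n = 2 ∧ ∃ u v : V, G.Adj u v ∧ W = {u, v}) ∨
  (3 ≤ n ∧ ∃ (v : V) (w : G.Walk v v), w.IsCycle ∧ w.length = n ∧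
      W = {x | x ∈ w.support})

/-- `p̄`: the length of a longest path in `G \ C`. -/
noncomputable def pathBar (G : SimpleGraph V) [Fintype V] {v : V} (w : G.Walk v v) : ℕ :=
  sSup {n | ∃ (a b : {x : V | x ∉ w.support})
      (p : (G.induce {x : V | x ∉ w.support}).Walk a b), p.IsPath ∧ p.length = n}

/-- `c̄`: the length of a longest (generalized) cycle in `G \ C`. -/
noncomputable def cycBar (G : SimpleGraph V) [Fintype V] {v : V} (w : G.Walk v v) : ℕ :=
  sSup {n | ∃ W, ExtCycle (G.induce {x : V | x ∉ w.support}) W n}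

/-- `CD_m`-cycle: every (generalized) cycle of length at least `m` meets `w`. -/
def IsCDCycle (G : SimpleGraph V) {v : V} (w : G.Walk v v) (m : ℕ) : Prop :=
  w.IsCycle ∧ ∀ (W : Set V) (n : ℕ), ExtCycle G W n → m ≤ n → ∃ x ∈ W, x ∈ w.support


namespace LongestCycle

open Finset

open scoped Classical

/-- The list `l` enumerates the vertices of a cycle of `G` in cyclic order. -/
def IsCycleList (G : SimpleGraph V) (l : List V) : Prop :=
  3 ≤ l.length ∧ l.Nodup ∧ l.IsChain G.Adj ∧ ∀ a ∈ l.head?, ∀ b ∈ l.getLast?, G.Adj b a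

/-- `l` enumerates the vertices of a path of `G` from `u` to `v` with all vertices in `R`. -/
structure IsPathList (G : SimpleGraph V) (R : Finset V) (u v : V) (l : List V) : Prop where
  chain : l.IsChain G.Adj
  nodup : l.Nodup
  mem : ∀ a ∈ l, a ∈ R
  head : l.head? = some u
  last : l.getLast? = some v

/-- `G` has a path of length at least `m` from `u` to `v` inside `R`. -/
def LinkedIn (G : SimpleGraph V) (R : Finset V) (u v : V) (m : ℕ) : Prop :=
  ∃ l : List V, IsPathList G R u v l ∧ m + 1 ≤ l.length

/-- `R` induces a connected subgraph of `G`, phrased through closed subsets. -/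
def ConnSet (G : SimpleGraph V) (R : Finset V) : Prop :=
  R.Nonempty ∧ ∀ T ⊆ R, T.Nonempty → (∀ a ∈ T, ∀ b ∈ R, G.Adj a b → b ∈ T) → T = R

section Paths

variable {G : SimpleGraph V} {R R' : Finset V} {u v w : V} {m m' : ℕ}

lemma LinkedIn.refl (hu : u ∈ R) : LinkedIn G R u u 0 :=
  ⟨[u], ⟨by simp, by simp, by simpa using hu, by simp, by simp⟩, by simp⟩

lemma LinkedIn.mono (h : LinkedIn G R u v m) (hR : R ⊆ R') (hm : m' ≤ m) :
    LinkedIn G R' u v m' := by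
  obtain ⟨l, hl, hlen⟩ := h
  exact ⟨l, ⟨hl.chain, hl.nodup, fun a ha => hR (hl.mem a ha), hl.head, hl.last⟩, by omega⟩

lemma IsPathList.reverse {l : List V} (hl : IsPathList G R u v l) :
    IsPathList G R v u l.reverse := by
  refine ⟨?_, by simpa using hl.nodup, by simpa using hl.mem, by simpa using hl.last,
    by simpa using hl.head⟩
  rw [List.isChain_reverse]
  exact hl.chain.imp fun a b h => h.symm

lemma LinkedIn.symm (h : LinkedIn G R u v m) : LinkedIn G R v u m := by
  obtain ⟨l, hl, hlen⟩ := h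
  exact ⟨l.reverse, hl.reverse, by simpa using hlen⟩

lemma IsPathList.ne_nil {l : List V} (hl : IsPathList G R u v l) : l ≠ [] := by
  rintro rfl
  simpa using hl.head

lemma IsPathList.append {l l' : List V} {a b : V} (hl : IsPathList G R u a l)
    (hl' : IsPathList G R' b v l') (hd : Disjoint R R') (hab : G.Adj a b) :
    IsPathList G (R ∪ R') u v (l ++ l') := by
  refine ⟨?_, ?_, ?_, ?_, ?_⟩
  · rw [List.isChain_append]
    refine ⟨hl.chain, hl'.chain, ?_⟩
    intro x hx y hy
    rw [hl.last] at hx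
    rw [hl'.head] at hy
    simp only [Option.mem_def, Option.some.injEq] at hx hy
    subst hx hy
    exact hab
  · rw [List.nodup_append]
    refine ⟨hl.nodup, hl'.nodup, fun x hx y hy hxy => ?_⟩
    subst hxy
    exact Finset.disjoint_left.1 hd (hl.mem _ hx) (hl'.mem _ hy)
  · intro x hx
    rcases List.mem_append.1 hx with hx | hx
    · exact Finset.mem_union_left _ (hl.mem _ hx)
    · exact Finset.mem_union_right _ (hl'.mem _ hx)
  · simp [List.head?_append, hl.head]
  · simp [List.getLast?_append, hl'.last]

/-- Two linked pairs in disjoint sets can be joined through an edge. -/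
lemma LinkedIn.append {a b : V} (h : LinkedIn G R u a m) (h' : LinkedIn G R' b v m')
    (hd : Disjoint R R') (hab : G.Adj a b) : LinkedIn G (R ∪ R') u v (m + m' + 1) := by
  obtain ⟨l, hl, hlen⟩ := h
  obtain ⟨l', hl', hlen'⟩ := h'
  exact ⟨l ++ l', hl.append hl' hd hab, by simp; omega⟩

lemma LinkedIn.cons (h : LinkedIn G R u v m) (hw : w ∉ R) (hwu : G.Adj w u) :
    LinkedIn G (insert w R) w v (m + 1) := by
  have := (LinkedIn.refl (G := G) (Finset.mem_singleton_self w)).append h (by simpa using hw) hwu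
  rw [zero_add, ← Finset.insert_eq] at this
  exact this

/-- Concatenation of two paths sharing exactly their common end. -/
lemma LinkedIn.trans (h : LinkedIn G R u v m) (h' : LinkedIn G R' v w m')
    (hd : R ∩ R' ⊆ {v}) : LinkedIn G (R ∪ R') u w (m + m') := by
  obtain ⟨l', hl', hlen'⟩ := h'
  have hv : v ∈ R := by
    obtain ⟨l, hl, -⟩ := h
    exact hl.mem v (List.mem_of_getLast? hl.last)
  match l', hl', hlen' with
  | [], hl', _ => exact absurd rfl hl'.ne_nil
  | [a], hl', hlen' =>
    have h1 := hl'.head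
    have h2 := hl'.last
    simp only [List.head?_cons, List.getLast?_singleton, Option.some.injEq] at h1 h2
    subst h1 h2
    exact h.mono Finset.subset_union_left (by simp at hlen'; omega)
  | a :: b :: t, hl', hlen' =>
    have h1 := hl'.head
    simp only [List.head?_cons, Option.some.injEq] at h1
    subst h1
    have hnd := hl'.nodup
    have hch := hl'.chain
    have hbt : IsPathList G (R'.erase a) b w (b :: t) :=
      ⟨hch.tail, hnd.tail, fun x hx => Finset.mem_erase.2
        ⟨fun hxa => (List.nodup_cons.1 hnd).1 (hxa ▸ hx), hl'.mem _ (List.mem_cons_of_mem _ hx)⟩,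
        by simp, by simpa using hl'.last⟩
    have hab : G.Adj a b := by
      simp only [List.isChain_cons_cons] at hch
      exact hch.1
    have := h.append ⟨b :: t, hbt, le_refl (t.length + 1)⟩ (m' := t.length) ?_ hab
    · refine this.mono (Finset.union_subset_union_right (Finset.erase_subset _ _)) ?_
      simp at hlen'
      omega
    · rw [Finset.disjoint_left]
      intro x hx hx'
      rw [Finset.mem_erase] at hx'
      exact hx'.1 (Finset.mem_singleton.1 (hd (Finset.mem_inter.2 ⟨hx, hx'.2⟩)))

lemma LinkedIn.extend {a b : V} (h : LinkedIn G R u a 0) (hab : G.Adj a b) (hb : b ∈ R) :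
    LinkedIn G R u b 0 := by
  obtain ⟨l, hl, -⟩ := h
  by_cases hbl : b ∈ l
  · obtain ⟨s, t, rfl⟩ := List.append_of_mem hbl
    refine ⟨s ++ [b], ⟨?_, ?_, ?_, ?_, ?_⟩, by simp⟩
    · have := hl.chain
      rw [List.append_cons, List.isChain_append] at this
      exact this.1
    · have := hl.nodup
      rw [List.append_cons, List.nodup_append] at this
      exact this.1
    · intro x hx
      refine hl.mem x ?_
      rw [List.append_cons]
      exact List.mem_append_left _ hx
    · have := hl.head
      cases s <;> simpa using this
    · simp
  · refine ⟨l ++ [b], ⟨?_, ?_, ?_, ?_, ?_⟩, by simp⟩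
    · rw [List.isChain_append]
      refine ⟨hl.chain, by simp, ?_⟩
      intro x hx y hy
      rw [hl.last] at hx
      simp only [Option.mem_def, Option.some.injEq, List.head?_cons] at hx hy
      subst hx hy
      exact hab
    · rw [List.nodup_append]
      refine ⟨hl.nodup, by simp, fun x hx y hy hxy => ?_⟩
      simp only [List.mem_singleton] at hy
      subst hxy hy
      exact hbl hx
    · intro x hx
      rcases List.mem_append.1 hx with hx | hx
      · exact hl.mem _ hx
      · simp only [List.mem_singleton] at hx
        exact hx ▸ hb
    · simp [List.head?_append, hl.head]
    · simp

lemma ConnSet.linkedIn (h : ConnSet G R) (hu : u ∈ R) (hv : v ∈ R) : LinkedIn G R u v 0 := by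
  have := h.2 (R.filter fun w => LinkedIn G R u w 0) (Finset.filter_subset _ _)
    ⟨u, by simpa [hu] using LinkedIn.refl hu⟩ ?_
  · rw [← this] at hv
    exact (Finset.mem_filter.1 hv).2
  · intro a ha b hb hab
    rw [Finset.mem_filter] at ha ⊢
    exact ⟨hb, ha.2.extend hab hb⟩

end Paths

/-- `c` traverses a cycle of length `n` of `G`, and no cycle of `G` is longer. -/
structure IsMaxCycle (G : SimpleGraph V) {n : ℕ} (c : ZMod n → V) : Prop where
  three_le : 3 ≤ n
  inj : Function.Injective c
  adj : ∀ i, G.Adj (c i) (c (i + 1))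
  max : ∀ l, IsCycleList G l → l.length ≤ n

/-- The vertices `c i, c (i + 1), …, c (i + k - 1)` in this order. -/
def arc {n : ℕ} (c : ZMod n → V) (i : ZMod n) (k : ℕ) : List V :=
  (List.range k).map fun t : ℕ => c (i + t)

/-- The set of vertices of `arc c i k`. -/
noncomputable def arcSet {n : ℕ} (c : ZMod n → V) (i : ZMod n) (k : ℕ) : Finset V :=
  (Finset.range k).image fun t : ℕ => c (i + t)

section Arcs

variable {G : SimpleGraph V} {n : ℕ} {c : ZMod n → V}

lemma natCast_inj_of_lt {s t : ℕ} (hs : s < n) (ht : t < n)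
    (h : (s : ZMod n) = t) : s = t := by
  have := (ZMod.natCast_eq_natCast_iff' s t n).1 h
  rwa [Nat.mod_eq_of_lt hs, Nat.mod_eq_of_lt ht] at this

@[simp] lemma length_arc (i : ZMod n) (k : ℕ) : (arc c i k).length = k := by simp [arc]

lemma mem_arcSet {i : ZMod n} {k : ℕ} {v : V} :
    v ∈ arcSet c i k ↔ ∃ t < k, c (i + t) = v := by
  simp [arcSet]

lemma IsMaxCycle.isPathList_arc (hc : IsMaxCycle G c) (i : ZMod n) {k : ℕ} (hk : k < n) :
    IsPathList G (arcSet c i (k + 1)) (c i) (c (i + k)) (arc c i (k + 1)) := by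
  refine ⟨?_, ?_, ?_, ?_, ?_⟩
  · rw [List.isChain_iff_getElem]
    intro t ht
    have := hc.adj (i + t)
    simpa [arc, add_assoc] using this
  · refine List.Nodup.map_on ?_ List.nodup_range
    intro s hs t ht h
    rw [List.mem_range] at hs ht
    exact natCast_inj_of_lt (by omega) (by omega) (add_left_cancel (hc.inj h))
  · intro a ha
    simpa [arc, mem_arcSet] using ha
  · simp [arc, List.range_succ_eq_map]
  · simp [arc, List.range_succ]

lemma IsMaxCycle.disjoint_arcSet (hc : IsMaxCycle G c) (i : ZMod n) {a b : ℕ} (hab : a + b ≤ n) :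
    Disjoint (arcSet c i a) (arcSet c (i + a) b) := by
  rw [Finset.disjoint_left]
  intro v hv hv'
  obtain ⟨s, hs, rfl⟩ := mem_arcSet.1 hv
  obtain ⟨t, ht, h⟩ := mem_arcSet.1 hv'
  have h1 := hc.inj h
  rw [add_assoc, ← Nat.cast_add] at h1
  have := natCast_inj_of_lt (by omega) (by omega) (add_left_cancel h1)
  omega

lemma IsPathList.isCycleList {R : Finset V} {u v : V} {l : List V} (hl : IsPathList G R u v l)
    (hvu : G.Adj v u) (hlen : 3 ≤ l.length) : IsCycleList G l := by
  refine ⟨hlen, hl.nodup, hl.chain, ?_⟩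
  intro a ha b hb
  rw [hl.head] at ha
  rw [hl.last] at hb
  simp only [Option.mem_def, Option.some.injEq] at ha hb
  subst ha hb
  exact hvu

lemma disjoint_arcSet_of_off {R : Finset V} (hR : ∀ k, c k ∉ R) (i : ZMod n) (k : ℕ) :
    Disjoint R (arcSet c i k) := by
  rw [Finset.disjoint_left]
  intro v hv hv'
  obtain ⟨t, -, rfl⟩ := mem_arcSet.1 hv'
  exact hR _ hv

/-- A path off a longest cycle cannot be inserted in place of a shorter segment. -/
lemma IsMaxCycle.insertion (hc : IsMaxCycle G c) {R : Finset V} (hR : ∀ k, c k ∉ R)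
    {i : ZMod n} {t m : ℕ} {u v : V} (ht : 1 ≤ t) (htn : t < n) (h : LinkedIn G R u v m)
    (hu : G.Adj (c i) u) (hv : G.Adj (c (i + t)) v) : m + 2 ≤ t := by
  obtain ⟨q, hq, hlen⟩ := h
  have ha := hc.isPathList_arc (i + t) (k := n - t) (by omega)
  have hi : i + (t : ZMod n) + ((n - t : ℕ) : ZMod n) = i := by
    rw [add_assoc, ← Nat.cast_add, Nat.add_sub_cancel' htn.le]
    simp
  rw [hi] at ha
  have h3 := hc.three_le
  have := hc.max _ ((hq.append ha (disjoint_arcSet_of_off hR _ _) hv.symm).isCycleList hu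
    (by simp; omega))
  simp at this
  omega

lemma IsMaxCycle.reverse (hc : IsMaxCycle G c) : IsMaxCycle G fun k => c (-k) := by
  refine ⟨hc.three_le, fun i j h => neg_injective (hc.inj h), fun i => ?_, hc.max⟩
  have := (hc.adj (-(i + 1))).symm
  simpa using this

end Arcs

section Gaps

variable {n : ℕ} {U : Finset (ZMod n)} {i j : ZMod n}

/-- The distance from `i` to the next element of `U` in the cyclic order. -/
noncomputable def gap (U : Finset (ZMod n)) (i : ZMod n) : ℕ :=
  sInf {t : ℕ | 1 ≤ t ∧ i + t ∈ U}

/-- The next element of `U` after `i` in the cyclic order. -/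
noncomputable def nx (U : Finset (ZMod n)) (i : ZMod n) : ZMod n := i + gap U i

lemma notMem_of_lt_gap {t : ℕ} (ht : 1 ≤ t) (h : t < gap U i) : i + (t : ZMod n) ∉ U :=
  fun hm => Nat.notMem_of_lt_sInf h ⟨ht, hm⟩

lemma gap_le {t : ℕ} (ht : 1 ≤ t) (h : i + (t : ZMod n) ∈ U) : gap U i ≤ t :=
  Nat.sInf_le ⟨ht, h⟩

variable [NeZero n]

lemma exists_step (i j : ZMod n) : ∃ t < n, j = i + (t : ZMod n) :=
  ⟨(j - i).val, ZMod.val_lt _, by simp⟩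

lemma gap_spec (hU : U.Nonempty) (i : ZMod n) : 1 ≤ gap U i ∧ nx U i ∈ U := by
  have hne : {t : ℕ | 1 ≤ t ∧ i + t ∈ U}.Nonempty := by
    obtain ⟨u, hu⟩ := hU
    obtain ⟨t, -, rfl⟩ := exists_step i u
    exact ⟨t + n, by have := NeZero.pos n; omega, by simpa using hu⟩
  exact Nat.sInf_mem hne

lemma gap_lt (hU : 2 ≤ U.card) (i : ZMod n) : gap U i < n := by
  obtain ⟨u, hu, hui⟩ := Finset.exists_mem_ne (by omega : 1 < U.card) i
  obtain ⟨t, ht, rfl⟩ := exists_step i u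
  refine lt_of_le_of_lt (gap_le ?_ hu) ht
  rcases Nat.eq_zero_or_pos t with rfl | h
  · simp at hui
  · exact h

lemma gap_sum_le (U : Finset (ZMod n)) : ∑ i ∈ U, gap U i ≤ n := by
  have : (U.sigma fun i => Finset.range (gap U i)).card ≤ (Finset.univ : Finset (ZMod n)).card := by
    have key : ∀ i ∈ U, ∀ j ∈ U, ∀ s t : ℕ, s < gap U i → t < gap U j → s ≤ t →
        i + (s : ZMod n) = j + t → i = j ∧ s = t := by
      intro i hi j hj s t hs ht hst h
      have hij : i = j + ((t - s : ℕ) : ZMod n) := by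
        rw [Nat.cast_sub hst, ← add_sub_assoc, ← h, add_sub_cancel_right]
      rcases Nat.eq_zero_or_pos (t - s) with h0 | h0
      · rw [h0] at hij
        exact ⟨by simpa using hij, by omega⟩
      · exact absurd (hij ▸ hi) (notMem_of_lt_gap h0 (by omega))
    refine Finset.card_le_card_of_injOn (fun p => p.1 + (p.2 : ZMod n)) (by simp) ?_
    rintro ⟨i, s⟩ hp ⟨j, t⟩ hq h
    simp only [Finset.coe_sigma, Set.mem_sigma_iff, Finset.mem_coe, Finset.mem_range] at hp hq h
    rcases le_total s t with hst | hst
    · obtain ⟨rfl, rfl⟩ := key i hp.1 j hq.1 s t hp.2 hq.2 hst h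
      rfl
    · obtain ⟨rfl, rfl⟩ := key j hq.1 i hp.1 t s hq.2 hp.2 hst h.symm
      rfl
  simpa using this

lemma sum_le_of_le_gap (w : ZMod n → ℕ) (h : ∀ i ∈ U, w i ≤ gap U i) : ∑ i ∈ U, w i ≤ n :=
  (Finset.sum_le_sum h).trans (gap_sum_le U)

lemma exists_start (hU : U.Nonempty) (k : ZMod n) :
    ∃ i ∈ U, ∃ t < gap U i, k = i + (t : ZMod n) := by
  have hex : ∃ t : ℕ, k - t ∈ U := by
    obtain ⟨u, hu⟩ := hU
    obtain ⟨t, -, rfl⟩ := exists_step u k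
    exact ⟨t, by simpa using hu⟩
  refine ⟨k - (Nat.find hex : ℕ), Nat.find_spec hex, Nat.find hex, ?_, by simp⟩
  by_contra hlt
  have hg := gap_spec hU (k - (Nat.find hex : ZMod n))
  refine Nat.find_min hex (m := Nat.find hex - gap U (k - (Nat.find hex : ZMod n))) (by omega) ?_
  rw [Nat.cast_sub (by omega)]
  convert hg.2 using 1
  rw [nx]
  ring

lemma card_le_sum_gap (hU : U.Nonempty) (P : Finset (ZMod n)) :
    P.card ≤ ∑ i ∈ U, ((Finset.range (gap U i)).filter fun t : ℕ => i + (t : ZMod n) ∈ P).card := by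
  have : P ⊆ U.biUnion fun i => ((Finset.range (gap U i)).filter
      fun t : ℕ => i + (t : ZMod n) ∈ P).image fun t : ℕ => i + (t : ZMod n) := by
    intro k hk
    obtain ⟨i, hi, t, ht, rfl⟩ := exists_start hU k
    simp only [Finset.mem_biUnion, Finset.mem_image, Finset.mem_filter, Finset.mem_range]
    exact ⟨i, hi, t, ⟨ht, hk⟩, rfl⟩
  refine (Finset.card_le_card this).trans (Finset.card_biUnion_le.trans ?_)
  exact Finset.sum_le_sum fun i _ => Finset.card_image_le

lemma nx_injOn (hU : U.Nonempty) : Set.InjOn (nx U) U := by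
  have key : ∀ i ∈ U, ∀ j ∈ U, gap U i ≤ gap U j → nx U i = nx U j → i = j := by
    intro i hi j hj hle h
    have hij : i = j + ((gap U j - gap U i : ℕ) : ZMod n) := by
      rw [Nat.cast_sub hle, ← add_sub_assoc, ← nx, ← h, nx, add_sub_cancel_right]
    rcases Nat.eq_zero_or_pos (gap U j - gap U i) with h0 | h0
    · rw [h0] at hij
      simpa using hij
    · have := (gap_spec hU i).1
      exact absurd (hij ▸ hi) (notMem_of_lt_gap h0 (by omega))
  intro i hi j hj h
  rcases le_total (gap U i) (gap U j) with hle | hle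
  · exact key i hi j hj hle h
  · exact (key j hj i hi hle h.symm).symm

lemma eq_of_nx_closed {T : Finset (ZMod n)} (hTU : T ⊆ U) (hT : T.Nonempty)
    (hcl : ∀ i ∈ T, nx U i ∈ T) : T = U := by
  have hU : U.Nonempty := hT.mono hTU
  have key : ∀ t : ℕ, ∀ i ∈ T, i + (t : ZMod n) ∈ U → i + (t : ZMod n) ∈ T := by
    intro t
    induction t using Nat.strong_induction_on with
    | _ t ih =>
      intro i hi h
      rcases Nat.eq_zero_or_pos t with rfl | h0
      · simpa using hi
      · have hle := gap_le h0 h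
        have h1 := (gap_spec hU i).1
        have heq : i + (t : ZMod n) = nx U i + ((t - gap U i : ℕ) : ZMod n) := by
          rw [Nat.cast_sub hle, nx]
          ring
        rw [heq] at h ⊢
        exact ih _ (by omega) _ (hcl i hi) h
  obtain ⟨i, hi⟩ := hT
  refine Finset.Subset.antisymm hTU fun u hu => ?_
  obtain ⟨t, -, rfl⟩ := exists_step i u
  exact key t i hi hu

lemma exists_nx_notMem {T : Finset (ZMod n)} (hTU : T ⊆ U) (hT : T.Nonempty) (hne : T ≠ U) :
    ∃ i ∈ T, nx U i ∉ T := by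
  by_contra! h
  exact hne (eq_of_nx_closed hTU hT h)

lemma forall_of_succ {p : ZMod n → Prop} (h : ∀ i, p i → p (i + 1)) (hi : p i) (j : ZMod n) :
    p j := by
  obtain ⟨t, -, rfl⟩ := exists_step i j
  induction t with
  | zero => simpa using hi
  | succ t ih =>
    have := h _ ih
    rwa [add_assoc, ← Nat.cast_succ] at this

/-- The elements of `Z ∪ Z'` starting a segment with one end in `Z` and the other in `Z'`. -/
noncomputable def crossing (Z Z' : Finset (ZMod n)) : Finset (ZMod n) :=
  (Z ∪ Z').filter fun i =>
    (i ∈ Z ∧ nx (Z ∪ Z') i ∈ Z') ∨ (i ∈ Z' ∧ nx (Z ∪ Z') i ∈ Z)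

lemma inter_subset_crossing (Z Z' : Finset (ZMod n)) : Z ∩ Z' ⊆ crossing Z Z' := by
  intro i hi
  rw [Finset.mem_inter] at hi
  have hU : i ∈ Z ∪ Z' := Finset.mem_union_left _ hi.1
  have := (gap_spec ⟨i, hU⟩ i).2
  rw [crossing, Finset.mem_filter]
  refine ⟨hU, ?_⟩
  rcases Finset.mem_union.1 this with h | h
  · exact Or.inr ⟨hi.2, h⟩
  · exact Or.inl ⟨hi.1, h⟩

lemma card_crossing {Z Z' : Finset (ZMod n)} (hZ : Z.Nonempty) (hZ' : Z'.Nonempty)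
    (hne : Z ≠ Z') :
    2 ≤ (crossing Z Z').card ∧ (Z ∩ Z').card + 1 ≤ (crossing Z Z').card := by
  rcases Finset.eq_empty_or_nonempty (Z ∩ Z') with h0 | h0
  · suffices 2 ≤ (crossing Z Z').card by
      rw [h0]
      exact ⟨this, by rw [Finset.card_empty]; omega⟩
    have hd : ∀ k, k ∈ Z → k ∈ Z' → False := fun k hk hk' => by
      have : k ∈ Z ∩ Z' := Finset.mem_inter.2 ⟨hk, hk'⟩
      simp [h0] at this
    obtain ⟨i, hi, hi'⟩ := exists_nx_notMem (Finset.subset_union_left (s₁ := Z) (s₂ := Z')) hZ (by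
      intro h
      obtain ⟨k, hk⟩ := hZ'
      exact hd k (h ▸ Finset.mem_union_right _ hk) hk)
    obtain ⟨j, hj, hj'⟩ := exists_nx_notMem (Finset.subset_union_right (s₁ := Z) (s₂ := Z')) hZ' (by
      intro h
      obtain ⟨k, hk⟩ := hZ
      exact hd k hk (h ▸ Finset.mem_union_left _ hk))
    have hU : (Z ∪ Z').Nonempty := ⟨i, Finset.mem_union_left _ hi⟩
    have hni := Finset.mem_union.1 (gap_spec hU i).2
    have hnj := Finset.mem_union.1 (gap_spec hU j).2
    refine Finset.one_lt_card.2 ⟨i, ?_, j, ?_, ?_⟩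
    · rw [crossing, Finset.mem_filter]
      exact ⟨Finset.mem_union_left _ hi, Or.inl ⟨hi, hni.resolve_left hi'⟩⟩
    · rw [crossing, Finset.mem_filter]
      exact ⟨Finset.mem_union_right _ hj, Or.inr ⟨hj, hnj.resolve_right hj'⟩⟩
    · rintro rfl
      exact hd i hi hj
  · suffices (Z ∩ Z').card + 1 ≤ (crossing Z Z').card by
      have h1 := h0.card_pos
      exact ⟨by omega, this⟩
    obtain ⟨a, ha⟩ := h0
    rw [Finset.mem_inter] at ha
    obtain ⟨i, hi, hi'⟩ := exists_nx_notMem (T := (Z ∪ Z') \ (Z ∩ Z')) (U := Z ∪ Z')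
      Finset.sdiff_subset (by
        rw [Finset.nonempty_iff_ne_empty]
        intro h
        rw [Finset.sdiff_eq_empty_iff_subset] at h
        apply hne
        ext k
        have := @h k
        simp only [Finset.mem_union, Finset.mem_inter] at this
        tauto) (by
        intro h
        have : a ∈ (Z ∪ Z') \ (Z ∩ Z') := by
          rw [h]
          exact Finset.mem_union_left _ ha.1
        simp [ha] at this)
    rw [Finset.mem_sdiff] at hi
    have hni := (gap_spec ⟨i, hi.1⟩ i).2
    rw [Finset.mem_sdiff, not_and_not_right] at hi'
    have hni' := Finset.mem_inter.1 (hi' hni)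
    rw [← Finset.card_insert_of_notMem hi.2]
    refine Finset.card_le_card (Finset.insert_subset ?_ (inter_subset_crossing Z Z'))
    rw [crossing, Finset.mem_filter]
    refine ⟨hi.1, ?_⟩
    rcases Finset.mem_union.1 hi.1 with h | h
    · exact Or.inl ⟨h, hni'.2⟩
    · exact Or.inr ⟨h, hni'.1⟩

end Gaps

section Connectivity

lemma IsCycleList.exists_walk {G : SimpleGraph V} {l : List V} (hl : IsCycleList G l) :
    ∃ (v : V) (w : G.Walk v v), w.IsCycle ∧ w.length = l.length ∧ ∀ x ∈ l, x ∈ w.support := by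
  obtain ⟨h3, hnd, hch, hends⟩ := hl
  have hne : l ≠ [] := by
    rintro rfl
    simp at h3
  have hadj : G.Adj (l.getLast hne) (l.head hne) :=
    hends _ (List.head?_eq_some_head hne) _ (List.getLast?_eq_some_getLast hne)
  refine ⟨_, Walk.cons hadj (Walk.ofSupport l hne hch), ?_, ?_, ?_⟩
  · rw [Walk.isCycle_iff_isPath_tail_and_le_length]
    refine ⟨?_, ?_⟩
    · rw [Walk.isPath_def]
      simpa using hnd
    · rw [Walk.length_cons, Walk.length_ofSupport]
      omega
  · rw [Walk.length_cons, Walk.length_ofSupport]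
    omega
  · intro x hx
    rw [Walk.support_cons, Walk.support_ofSupport]
    exact List.mem_cons_of_mem _ hx


variable [Fintype V] {G : SimpleGraph V} {k : ℕ}

/-- The neighbourhood of `v`. -/
noncomputable def nbr (G : SimpleGraph V) (v : V) : Finset V := Finset.univ.filter (G.Adj v)

@[simp] lemma mem_nbr {u v : V} : u ∈ nbr G v ↔ G.Adj v u := by simp [nbr]

lemma kConnected_cut (h : KConnected G k) {P F : Finset V} (hP : P.Nonempty)
    (hPF : Disjoint P F) (hcl : ∀ a ∈ P, ∀ b, G.Adj a b → b ∈ P ∪ F) (hF : F.card < k) :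
    P ∪ F = Finset.univ := by
  have hconn := h.2 F hF
  obtain ⟨p, hp⟩ := hP
  refine Finset.eq_univ_iff_forall.2 fun v => ?_
  by_contra hv
  rw [Finset.mem_union, not_or] at hv
  have hpF : p ∈ (F : Set V)ᶜ := by simpa using Finset.disjoint_left.1 hPF hp
  have hvF : v ∈ (F : Set V)ᶜ := by simpa using hv.2
  obtain ⟨w⟩ := hconn.preconnected ⟨p, hpF⟩ ⟨v, hvF⟩
  have key : ∀ {a b : ((F : Set V)ᶜ : Set V)}, (G.induce ((F : Set V)ᶜ)).Walk a b →
      a.1 ∈ P → b.1 ∈ P := by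
    intro a b w
    induction w with
    | nil => exact id
    | @cons a b _ hab _ ih =>
      intro ha
      refine ih ?_
      have hb := hcl _ ha _ hab
      rw [Finset.mem_union] at hb
      exact hb.resolve_right b.2
  exact hv.1 (key w hp)

lemma le_card_nbr (h : KConnected G k) (v : V) : k ≤ (nbr G v).card := by
  by_contra! hlt
  have := kConnected_cut h (P := {v}) (F := nbr G v) (by simp) (by simp)
    (by simp +contextual) hlt
  have hcard := h.1
  rw [← Finset.card_univ, ← this] at hcard
  have := Finset.card_union_le {v} (nbr G v)
  rw [Finset.card_singleton] at this
  omega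

lemma connSet_compl (h : KConnected G k) {F : Finset V} (hF : F.card < k) : ConnSet G Fᶜ := by
  refine ⟨?_, fun T hT hne hcl => ?_⟩
  · rw [← Finset.card_pos, Finset.card_compl]
    have := h.1
    omega
  · have hd : Disjoint T F := by
      rw [Finset.disjoint_left]
      intro x hx
      simpa using hT hx
    have := kConnected_cut h hne hd (fun a ha b hab => ?_) hF
    · refine Finset.Subset.antisymm hT fun x hx => ?_
      have hx' : x ∈ T ∪ F := by simp [this]
      rw [Finset.mem_union] at hx'
      exact hx'.resolve_right (by simpa using hx)
    · by_cases hb : b ∈ F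
      · exact Finset.mem_union_right _ hb
      · exact Finset.mem_union_left _ (hcl a ha b (by simpa using hb) hab)

lemma exists_isCycleList (h : KConnected G k) (hk : 2 ≤ k) : ∃ l, IsCycleList G l := by
  have hpos : 0 < Fintype.card V := by have := h.1; omega
  obtain ⟨v⟩ := Fintype.card_pos_iff.1 hpos
  obtain ⟨a, ha, b, hb, hab⟩ := Finset.one_lt_card.1 (hk.trans (le_card_nbr h v))
  rw [mem_nbr] at ha hb
  obtain ⟨l, hl, -⟩ := (connSet_compl h (F := {v}) (by simp; omega)).linkedIn
    (u := a) (v := b) (by simpa using ha.ne') (by simpa using hb.ne')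
  have hlen : 2 ≤ l.length := by
    have h1 := hl.head
    have h2 := hl.last
    match l, h1, h2 with
    | [x], h1, h2 =>
      simp only [List.head?_cons, List.getLast?_singleton, Option.some.injEq] at h1 h2
      exact absurd (h1.symm.trans h2) hab
    | _ :: _ :: _, _, _ => simp
  have hv : IsPathList G {v} v v [v] := ⟨by simp, by simp, by simp, by simp, by simp⟩
  exact ⟨[v] ++ l, (hv.append hl (by simp) ha).isCycleList hb.symm (by simp; omega)⟩

lemma exists_isMaxCycle (h : KConnected G k) (hk : 2 ≤ k) :
    ∃ (n : ℕ) (_ : NeZero n) (c : ZMod n → V) (l : List V), IsMaxCycle G c ∧ IsCycleList G l ∧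
      l.length = n ∧ ∀ i, c i ∈ l := by
  have hbdd : ∀ l, IsCycleList G l → l.length ≤ Fintype.card V := fun l hl =>
    hl.2.1.length_le_card
  obtain ⟨l₀, hl₀⟩ := exists_isCycleList h hk
  let p : ℕ → Prop := fun m => ∃ l, IsCycleList G l ∧ l.length = m
  have hp : p (Nat.findGreatest p (Fintype.card V)) :=
    Nat.findGreatest_spec (hbdd l₀ hl₀) ⟨l₀, hl₀, rfl⟩
  obtain ⟨l, hl, hln⟩ := hp
  have hmax : ∀ l', IsCycleList G l' → l'.length ≤ l.length := fun l' hl' => by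
    rw [hln]
    exact Nat.le_findGreatest (hbdd l' hl') ⟨l', hl', rfl⟩
  have h3 := hl.1
  have hne : NeZero l.length := ⟨by omega⟩
  refine ⟨l.length, hne, fun i => l[i.val]'(ZMod.val_lt i), l, ⟨h3, ?_, ?_, hmax⟩, hl, rfl, ?_⟩
  · intro i j hij
    exact ZMod.val_injective _ ((hl.2.1.getElem_inj_iff).1 hij)
  · intro i
    have hi := ZMod.val_lt i
    have hi1 : i + 1 = ((i.val + 1 : ℕ) : ZMod l.length) := by simp
    rcases Nat.lt_or_ge (i.val + 1) l.length with hlt | hge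
    · have hv : (i + 1).val = i.val + 1 := by rw [hi1, ZMod.val_cast_of_lt hlt]
      have := (List.isChain_iff_getElem.1 hl.2.2.1) i.val hlt
      simpa [hv] using this
    · have hv : (i + 1).val = 0 := by
        rw [hi1, show i.val + 1 = l.length by omega]
        simp
      have hiv : i.val = l.length - 1 := by omega
      refine hl.2.2.2 _ ?_ _ ?_
      · simp [hv, List.head?_eq_getElem?]
      · simp [hiv, List.getLast?_eq_getElem?]
  · exact fun i => List.getElem_mem _

lemma length_le_circumference {l : List V} (hl : IsCycleList G l) :
    l.length ≤ circumference G := by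
  obtain ⟨v, w, hw, hlen, -⟩ := hl.exists_walk
  refine le_csSup ⟨Fintype.card V, ?_⟩ ⟨v, w, hw, hlen⟩
  rintro m ⟨u, w', hw', rfl⟩
  have := hw'.support_nodup.length_le_card
  simpa using this

lemma bddAbove_kConnected (G : SimpleGraph V) : BddAbove {k | KConnected G k} :=
  ⟨Fintype.card V, fun _ hk => hk.1.le⟩

lemma le_connectivity (h : KConnected G k) : k ≤ connectivity G :=
  le_csSup (bddAbove_kConnected G) h

lemma connected_of_connSet_compl {S : Finset V} (h : ConnSet G Sᶜ) :
    (G.induce ((↑S : Set V)ᶜ)).Connected := by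
  obtain ⟨p, hp⟩ := h.1
  have hp' : p ∈ ((↑S : Set V)ᶜ) := by simpa using hp
  have key := h.2 (Finset.univ.filter fun b => ∃ hb : b ∈ ((↑S : Set V)ᶜ),
    (G.induce ((↑S : Set V)ᶜ)).Reachable ⟨p, hp'⟩ ⟨b, hb⟩) ?_ ?_ ?_
  · rw [connected_iff_exists_forall_reachable]
    refine ⟨⟨p, hp'⟩, fun ⟨b, hb⟩ => ?_⟩
    have hb' : b ∈ Sᶜ := by simpa using hb
    rw [← key, Finset.mem_filter] at hb'
    exact hb'.2.2
  · intro b hb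
    rw [Finset.mem_filter] at hb
    simpa using hb.2.1
  · exact ⟨p, by simpa using hp⟩
  · intro a ha b hb hab
    rw [Finset.mem_filter] at ha ⊢
    obtain ⟨-, ha, hr⟩ := ha
    refine ⟨Finset.mem_univ _, by simpa using hb, hr.trans (Adj.reachable ?_)⟩
    simpa using hab

/-- A minimum vertex cut, unless `G` is nearly complete. -/
lemma exists_min_cut (G : SimpleGraph V) :
    Fintype.card V ≤ connectivity G + 1 ∨ ∃ A B S : Finset V, A.Nonempty ∧ B.Nonempty ∧
      Disjoint A B ∧ Disjoint A S ∧ Disjoint B S ∧ A ∪ B ∪ S = Finset.univ ∧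
      S.card ≤ connectivity G ∧ ∀ a ∈ A, ∀ b ∈ B, ¬ G.Adj a b := by
  have hn : ¬ KConnected G (connectivity G + 1) := fun hk => by
    have := le_connectivity hk
    omega
  rw [KConnected, not_and_or] at hn
  rcases hn with hn | hn
  · left
    omega
  · by_cases hcard : Fintype.card V ≤ connectivity G + 1
    · exact Or.inl hcard
    right
    push Not at hn
    obtain ⟨S, hS, hconn⟩ := hn
    have hS' : ¬ ConnSet G Sᶜ := fun h => hconn (connected_of_connSet_compl h)
    rw [ConnSet, not_and_or] at hS'
    have hne : Sᶜ.Nonempty := by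
      rw [← Finset.card_pos, Finset.card_compl]
      omega
    have hS'' := hS'.resolve_left (not_not.2 hne)
    push Not at hS''
    obtain ⟨T, hT, hTne, hcl, hTS⟩ := hS''
    refine ⟨T, Sᶜ \ T, S, hTne, ?_, Finset.disjoint_sdiff, ?_, ?_, ?_, by omega, ?_⟩
    · rw [Finset.sdiff_nonempty]
      exact fun h => hTS (Finset.Subset.antisymm hT h)
    · rw [Finset.disjoint_left]
      intro x hx
      simpa using hT hx
    · rw [Finset.disjoint_left]
      intro x hx
      simp at hx
      exact hx.1
    · ext x
      simp
      tauto
    · intro a ha b hb hab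
      rw [Finset.mem_sdiff] at hb
      exact hb.2 (hcl a ha b hb.1 hab)

end Connectivity

section Pieces

variable {G : SimpleGraph V} {R I : Finset V} {v p u : V} {k : ℕ}

/-- The degree of `w` into `R`. -/
noncomputable def degIn (G : SimpleGraph V) (R : Finset V) (w : V) : ℕ := (R.filter (G.Adj w)).card

/-- `I` is a nonempty part of `R` avoiding the root `v` and attached to the rest of `R` only
at `p`. -/
structure IsPiece (G : SimpleGraph V) (R : Finset V) (v : V) (I : Finset V) (p : V) : Prop where
  nonempty : I.Nonempty
  subset : I ⊆ R
  root : v ∉ I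
  attach : p ∈ R
  attach_notMem : p ∉ I
  closed : ∀ a ∈ I, ∀ b ∈ R, G.Adj a b → b ∈ insert p I

/-- A piece with the least number of vertices. -/
structure IsMinPiece (G : SimpleGraph V) (R : Finset V) (v : V) (I : Finset V) (p : V) : Prop
    extends IsPiece G R v I p where
  min : ∀ J q, IsPiece G R v J q → I.card ≤ J.card

lemma exists_isMinPiece (hv : v ∈ R) (hR : R ≠ {v}) : ∃ I p, IsMinPiece G R v I p := by
  have h0 : IsPiece G R v (R.erase v) v := by
    refine ⟨?_, Finset.erase_subset _ _, by simp, hv, by simp, fun a _ b hb _ => ?_⟩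
    · rw [Finset.nonempty_iff_ne_empty]
      intro h
      rcases Finset.erase_eq_empty_iff _ _ |>.1 h with h | h
      · simp [h] at hv
      · exact hR h
    · rwa [Finset.insert_erase hv]
  have hex : ∃ m, ∃ I p, IsPiece G R v I p ∧ I.card = m := ⟨_, _, _, h0, rfl⟩
  obtain ⟨I, p, hI, hm⟩ := Nat.find_spec hex
  exact ⟨I, p, hI, fun J q hJ => hm ▸ Nat.find_min' hex ⟨J, q, hJ, rfl⟩⟩

lemma IsPiece.linkedIn_root (h : IsPiece G R v I p) (hR : ConnSet G R) (hv : v ∈ R) :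
    LinkedIn G (R \ I) p v 0 := by
  have hp : p ∈ R \ I := Finset.mem_sdiff.2 ⟨h.attach, h.attach_notMem⟩
  have key := hR.2 (((R \ I).filter fun w => LinkedIn G (R \ I) p w 0) ∪ I) ?_ ?_ ?_
  · rw [← key, Finset.mem_union] at hv
    exact (Finset.mem_filter.1 (hv.resolve_right h.root)).2
  · exact Finset.union_subset ((Finset.filter_subset _ _).trans Finset.sdiff_subset) h.subset
  · exact h.nonempty.mono Finset.subset_union_right
  · intro a ha b hb hab
    rw [Finset.mem_union, Finset.mem_filter] at ha ⊢
    by_cases hbI : b ∈ I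
    · exact Or.inr hbI
    have hb' : b ∈ R \ I := Finset.mem_sdiff.2 ⟨hb, hbI⟩
    refine Or.inl ⟨hb', ?_⟩
    rcases ha with ha | ha
    · exact ha.2.extend hab hb'
    · obtain rfl := (Finset.mem_insert.1 (h.closed a ha b hb hab)).resolve_right hbI
      exact LinkedIn.refl hp

/-- Deleting a vertex of a minimal piece leaves it connected to its attachment. -/
lemma IsMinPiece.connSet_erase (h : IsMinPiece G R v I p) (hu : u ∈ I) :
    ConnSet G ((insert p I).erase u) := by
  have hpu : p ≠ u := fun e => h.attach_notMem (e ▸ hu)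
  refine ⟨⟨p, by simp [hpu]⟩, ?_⟩
  have key : ∀ T ⊆ (insert p I).erase u, T.Nonempty →
      (∀ a ∈ T, ∀ b ∈ (insert p I).erase u, G.Adj a b → b ∈ T) → p ∈ T := by
    intro T hT hne hcl
    by_contra hpT
    have hTI : T ⊆ I := fun x hx => by
      have := hT hx
      rw [Finset.mem_erase, Finset.mem_insert] at this
      exact this.2.resolve_left fun e => hpT (e ▸ hx)
    have huT : u ∉ T := fun e => by simpa using hT e
    have hlt : T.card < I.card := Finset.card_lt_card
      ⟨hTI, fun hh => huT (hh hu)⟩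
    refine absurd (h.min T u ⟨hne, hTI.trans h.subset, fun e => h.root (hTI e), h.subset hu, huT,
      fun a ha b hb hab => ?_⟩) (by omega)
    have hb' := h.closed a (hTI ha) b hb hab
    by_cases hbu : b = u
    · simp [hbu]
    · exact Finset.mem_insert_of_mem (hcl a ha b (Finset.mem_erase.2 ⟨hbu, hb'⟩) hab)
  intro T hT hne hcl
  by_contra hTne
  have hpT := key T hT hne hcl
  have := key (((insert p I).erase u) \ T) Finset.sdiff_subset ?_ ?_
  · exact (Finset.mem_sdiff.1 this).2 hpT
  · rw [Finset.sdiff_nonempty]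
    exact fun hh => hTne (Finset.Subset.antisymm hT hh)
  · intro a ha b hb hab
    rw [Finset.mem_sdiff] at ha ⊢
    exact ⟨hb, fun hbT => ha.2 (hcl b hbT a ha.1 hab.symm)⟩

/-- Every vertex of a minimal piece is joined to the attachment by a path whose length is at least
the minimum degree of the piece. -/
lemma IsMinPiece.linkedIn_attach (hR : ConnSet G R) (h : IsMinPiece G R v I p)
    (hk : ∀ w ∈ I, k ≤ degIn G R w) (hu : u ∈ I) : LinkedIn G (insert p I) u p k := by
  induction hm : I.card using Nat.strong_induction_on generalizing R I v p u k with
  | _ m ih =>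
    have hpu : p ≠ u := fun e => h.attach_notMem (e ▸ hu)
    have hR' := h.connSet_erase hu
    set R' := (insert p I).erase u with hR'def
    have hpR' : p ∈ R' := by simp [hR'def, hpu]
    have hsub : R' ⊆ insert p I := Finset.erase_subset _ _
    have huR' : u ∉ R' := by simp [hR'def]
    by_cases hsing : R' = {p}
    · have hIu : ∀ x ∈ I, x = u := fun x hx => by
        by_contra hxu
        have : x ∈ R' := by simp [hR'def, hxu, hx]
        rw [hsing, Finset.mem_singleton] at this
        exact h.attach_notMem (this ▸ hx)
      have hN : ∀ b ∈ R, G.Adj u b → b = p := fun b hb hab => by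
        rcases Finset.mem_insert.1 (h.closed u hu b hb hab) with e | e
        · exact e
        · exact absurd (hIu b e) hab.ne'
      have hup : G.Adj u p := by
        by_contra hup
        have := hR.2 {u} (by simpa using h.subset hu) (by simp) (fun a ha b hb hab => by
          rw [Finset.mem_singleton] at ha
          subst ha
          exact absurd (hN b hb hab ▸ hab) hup)
        have hp := h.attach
        rw [← this, Finset.mem_singleton] at hp
        exact hpu hp
      have hk1 : k ≤ 1 := by
        refine (hk u hu).trans ?_
        have : R.filter (G.Adj u) ⊆ {p} := fun b hb => by
          rw [Finset.mem_filter] at hb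
          simpa using hN b hb.1 hb.2
        simpa [degIn] using Finset.card_le_card this
      refine ((LinkedIn.refl (Finset.mem_singleton_self p)).cons (by simpa using hpu.symm)
        hup).mono ?_ hk1
      intro x hx
      simp only [Finset.mem_insert, Finset.mem_singleton] at hx ⊢
      rcases hx with rfl | rfl
      · exact Or.inr hu
      · exact Or.inl rfl
    · obtain ⟨I', p', h'⟩ := exists_isMinPiece (G := G) hpR' hsing
      have hI'I : I' ⊆ I := fun x hx => by
        have := hsub (h'.subset hx)
        exact (Finset.mem_insert.1 this).resolve_left fun e => h'.root (e ▸ hx)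
      have huI' : u ∉ I' := fun e => huR' (h'.subset e)
      have hlt : I'.card < I.card := Finset.card_lt_card ⟨hI'I, fun hh => huI' (hh hu)⟩
      obtain ⟨u', hu', huu'⟩ : ∃ u' ∈ I', G.Adj u u' := by
        by_contra! hno
        have hp'R : p' ∈ R := by
          rcases Finset.mem_insert.1 (hsub h'.attach) with e | e
          · exact e ▸ h.attach
          · exact h.subset e
        refine absurd (h.min I' p' ⟨h'.nonempty, hI'I.trans h.subset, fun e => h.root (hI'I e),
          hp'R, h'.attach_notMem, fun a ha b hb hab => ?_⟩) (by omega)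
        have hb' := h.closed a (hI'I ha) b hb hab
        have hbu : b ≠ u := fun e => hno a ha (e ▸ hab.symm)
        exact h'.closed a ha b (Finset.mem_erase.2 ⟨hbu, hb'⟩) hab
      have hdeg : ∀ w ∈ I', k - 1 ≤ degIn G R' w := by
        intro w hw
        have h1 := hk w (hI'I hw)
        have h2 : R.filter (G.Adj w) ⊆ insert u (R'.filter (G.Adj w)) := by
          intro b hb
          rw [Finset.mem_filter] at hb
          have hb' := h.closed w (hI'I hw) b hb.1 hb.2
          by_cases hbu : b = u
          · simp [hbu]
          · exact Finset.mem_insert_of_mem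
              (Finset.mem_filter.2 ⟨Finset.mem_erase.2 ⟨hbu, hb'⟩, hb.2⟩)
        have h3 := (Finset.card_le_card h2).trans (Finset.card_insert_le _ _)
        rw [degIn] at h1 ⊢
        omega
      have hpath := ih I'.card (by omega) hR' h' hdeg hu' rfl
      have hroot := h'.linkedIn_root hR' hpR'
      have hup' : u ≠ p' := fun e => huR' (e ▸ h'.attach)
      have hcons := hpath.cons (w := u) (by simp [hup', huI']) huu'
      refine (hcons.trans hroot ?_).mono ?_ (by omega)
      · intro x hx
        simp only [Finset.mem_inter, Finset.mem_insert, Finset.mem_sdiff] at hx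
        rcases hx with ⟨rfl | rfl | hx, hx1, hx2⟩
        · exact absurd hx1 huR'
        · simp
        · exact absurd hx hx2
      · refine Finset.union_subset ?_ (Finset.sdiff_subset.trans hsub)
        refine Finset.insert_subset (Finset.mem_insert_of_mem hu) ?_
        exact Finset.insert_subset (hsub h'.attach) (hI'I.trans (Finset.subset_insert _ _))

/-- Every vertex of a minimal piece is joined to the root by a path whose length is at least
the minimum degree of the piece. -/
lemma IsMinPiece.linkedIn (hR : ConnSet G R) (hv : v ∈ R) (h : IsMinPiece G R v I p)
    (hk : ∀ w ∈ I, k ≤ degIn G R w) (hu : u ∈ I) : LinkedIn G R u v k := by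
  refine ((h.linkedIn_attach hR hk hu).trans (h.linkedIn_root hR hv) ?_).mono ?_ (by omega)
  · intro x hx
    simp only [Finset.mem_inter, Finset.mem_insert, Finset.mem_sdiff] at hx
    rcases hx with ⟨rfl | hx, -, hx2⟩
    · simp
    · exact absurd hx hx2
  · exact Finset.union_subset (Finset.insert_subset h.attach h.subset) Finset.sdiff_subset

lemma ConnSet.degIn_pos (h : ConnSet G R) {w : V} (hw : w ∈ R) (hne : R ≠ {w}) :
    1 ≤ degIn G R w := by
  rw [Nat.one_le_iff_ne_zero, degIn, Ne, Finset.card_eq_zero]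
  intro h0
  refine hne (h.2 {w} (by simpa using hw) (by simp) fun a ha b hb hab => ?_).symm
  rw [Finset.mem_singleton] at ha
  subst ha
  have : b ∈ R.filter (G.Adj a) := Finset.mem_filter.2 ⟨hb, hab⟩
  simp [h0] at this

end Pieces

section Attachments

lemma weighted_gap_le {n : ℕ} [NeZero n] {U A B : Finset (ZMod n)} {x y : ℕ}
    (hA : A ⊆ U) (hB : B ⊆ U) (hAB : Disjoint A B) (h2 : ∀ i ∈ U, 2 ≤ gap U i)
    (hx : ∀ i ∈ A, x + 2 ≤ gap U i) (hy : ∀ i ∈ B, y + 2 ≤ gap U i) :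
    2 * U.card + x * A.card + y * B.card ≤ n := by
  have key := sum_le_of_le_gap (U := U)
    (fun i => 2 + (if i ∈ A then x else 0) + (if i ∈ B then y else 0)) ?_
  · rw [Finset.sum_add_distrib, Finset.sum_add_distrib, Finset.sum_ite_mem, Finset.sum_ite_mem,
      Finset.inter_eq_right.2 hA, Finset.inter_eq_right.2 hB] at key
    simp only [Finset.sum_const, smul_eq_mul] at key
    linarith [mul_comm x A.card, mul_comm y B.card, mul_comm 2 U.card]
  · intro i hi
    have h := h2 i hi
    by_cases hiA : i ∈ A
    · have hiB := Finset.disjoint_left.1 hAB hiA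
      have := hx i hiA
      simp only [hiA, hiB, if_true, if_false]
      omega
    · by_cases hiB : i ∈ B
      · have := hy i hiB
        simp only [hiA, hiB, if_true, if_false]
        omega
      · simpa [hiA, hiB] using h

variable {G : SimpleGraph V} {n : ℕ} [NeZero n] {c : ZMod n → V} {H : Finset V}

/-- The positions on the cycle `c` adjacent to some vertex of `J`. -/
noncomputable def att (G : SimpleGraph V) (c : ZMod n → V) (J : Finset V) : Finset (ZMod n) :=
  Finset.univ.filter fun i => ∃ h ∈ J, G.Adj (c i) h

lemma mem_att {J : Finset V} {i : ZMod n} : i ∈ att G c J ↔ ∃ h ∈ J, G.Adj (c i) h := by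
  simp [att]

lemma att_mono {J K : Finset V} (h : J ⊆ K) : att G c J ⊆ att G c K := fun i hi => by
  obtain ⟨x, hx, hix⟩ := mem_att.1 hi
  exact mem_att.2 ⟨x, h hx, hix⟩

lemma att_union (J K : Finset V) : att G c (J ∪ K) = att G c J ∪ att G c K := by
  ext i
  simp only [mem_att, Finset.mem_union, or_and_right, exists_or]

/-- `H` is a component of the graph obtained by deleting the cycle `c`. -/
structure IsComp (G : SimpleGraph V) (c : ZMod n → V) (H : Finset V) : Prop where
  conn : ConnSet G H
  off : ∀ k, c k ∉ H
  closed : ∀ a ∈ H, ∀ b, G.Adj a b → b ∈ H ∨ ∃ k, c k = b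

lemma IsComp.two_le_gap (hc : IsMaxCycle G c) (hH : IsComp G c H) {U : Finset (ZMod n)}
    (hU : U ⊆ att G c H) (h2 : 2 ≤ U.card) (i : ZMod n) (hi : i ∈ U) : 2 ≤ gap U i := by
  have hne : U.Nonempty := ⟨i, hi⟩
  obtain ⟨u, hu, hiu⟩ := mem_att.1 (hU hi)
  obtain ⟨v, hv, hiv⟩ := mem_att.1 (hU (gap_spec hne i).2)
  have := hc.insertion hH.off (gap_spec hne i).1 (gap_lt h2 i) (hH.conn.linkedIn hu hv) hiu hiv
  omega

/-- Counting with the segments joining two sets of attachments. -/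
lemma IsComp.crossing_le (hc : IsMaxCycle G c) (hH : IsComp G c H) {J K : Finset V}
    {m : ℕ} (hlink : ∀ u ∈ J, ∀ v ∈ K, LinkedIn G H u v m)
    (h2 : 2 ≤ (att G c J ∪ att G c K).card) (i : ZMod n)
    (hi : i ∈ crossing (att G c J) (att G c K)) :
    m + 2 ≤ gap (att G c J ∪ att G c K) i := by
  rw [crossing, Finset.mem_filter] at hi
  obtain ⟨hiU, hi⟩ := hi
  have hg := (gap_spec ⟨i, hiU⟩ i).1
  rcases hi with ⟨h1, h1'⟩ | ⟨h1, h1'⟩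
  · obtain ⟨u, hu, hiu⟩ := mem_att.1 h1
    obtain ⟨v, hv, hiv⟩ := mem_att.1 h1'
    exact hc.insertion hH.off hg (gap_lt h2 i) (hlink u hu v hv) hiu hiv
  · obtain ⟨u, hu, hiu⟩ := mem_att.1 h1
    obtain ⟨v, hv, hiv⟩ := mem_att.1 h1'
    exact hc.insertion hH.off hg (gap_lt h2 i) (hlink v hv u hu).symm hiu hiv

variable [Fintype V]

lemma IsComp.le_degIn_add_card_att (hH : IsComp G c H) {J : Finset V} {w : V} (hw : w ∈ H)
    (hwJ : w ∈ J) {δ : ℕ} (hδ : ∀ v, δ ≤ (nbr G v).card) :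
    δ ≤ degIn G H w + (att G c J).card := by
  have hsub : nbr G w ⊆ H.filter (G.Adj w) ∪ (att G c J).image c := by
    intro b hb
    rw [mem_nbr] at hb
    rw [Finset.mem_union, Finset.mem_filter, Finset.mem_image]
    rcases hH.closed w hw b hb with h | ⟨k, rfl⟩
    · exact Or.inl ⟨h, hb⟩
    · exact Or.inr ⟨k, mem_att.2 ⟨w, hwJ, hb.symm⟩, rfl⟩
  calc δ ≤ (nbr G w).card := hδ w
    _ ≤ _ := Finset.card_le_card hsub
    _ ≤ _ := Finset.card_union_le _ _
    _ ≤ _ := Nat.add_le_add_left Finset.card_image_le _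

/-- A separation of part of a component yields many attachments. -/
lemma IsComp.le_card_att (hH : IsComp G c H) {k : ℕ} (hk : KConnected G k) {J E : Finset V}
    (hJ : J.Nonempty) (hJH : J ⊆ H) (hJE : Disjoint J E)
    (hcl : ∀ a ∈ J, ∀ b ∈ H, G.Adj a b → b ∈ J ∪ E) {x : V} (hxJ : x ∉ J) (hxE : x ∉ E)
    (hx : ∀ i ∈ att G c J, c i ≠ x) : k ≤ E.card + (att G c J).card := by
  by_contra! hlt
  have := kConnected_cut hk hJ (F := E ∪ (att G c J).image c) ?_ ?_ ?_
  · have hx' : x ∈ J ∪ (E ∪ (att G c J).image c) := by simp [this]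
    simp only [Finset.mem_union, Finset.mem_image, hxJ, hxE, false_or] at hx'
    obtain ⟨i, hi, hix⟩ := hx'
    exact hx i hi hix
  · rw [Finset.disjoint_union_right]
    refine ⟨hJE, ?_⟩
    rw [Finset.disjoint_left]
    intro a ha ha'
    obtain ⟨i, -, rfl⟩ := Finset.mem_image.1 ha'
    exact hH.off i (hJH ha)
  · intro a ha b hab
    rcases hH.closed a (hJH ha) b hab with hb | ⟨i, rfl⟩
    · have := hcl a ha b hb hab
      simp only [Finset.mem_union] at this ⊢
      tauto
    · simp only [Finset.mem_union, Finset.mem_image]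
      exact Or.inr (Or.inr ⟨i, mem_att.2 ⟨a, ha, hab.symm⟩, rfl⟩)
  · refine (Finset.card_union_le _ _).trans_lt (lt_of_le_of_lt ?_ hlt)
    exact Nat.add_le_add_left Finset.card_image_le _

lemma IsComp.four_le_card_att (hc : IsMaxCycle G c) (hH : IsComp G c H) (h4 : KConnected G 4) :
    4 ≤ (att G c H).card := by
  have h3 := hc.three_le
  obtain ⟨x, hx⟩ : ∃ x, x ∉ att G c H := by
    by_contra! hall
    obtain ⟨u, hu, h0u⟩ := mem_att.1 (hall 0)
    obtain ⟨v, hv, h1v⟩ := mem_att.1 (hall (0 + (1 : ℕ)))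
    have := hc.insertion hH.off le_rfl (by omega) (hH.conn.linkedIn hu hv) h0u h1v
    omega
  have := hH.le_card_att h4 (E := ∅) hH.conn.1 subset_rfl (by simp) (by simp +contextual)
    (hH.off x) (by simp) (fun i hi h => hx (hc.inj h ▸ hi))
  simpa using this

end Attachments

section LargeComponent

variable {G : SimpleGraph V} {n : ℕ} {H J : Finset V} {v : V}

lemma ConnSet.insert_part (h : ConnSet G H) (hv : v ∈ H) (hJ : J ⊆ H) (hvJ : v ∉ J)
    (hcl : ∀ a ∈ J, ∀ b ∈ H, G.Adj a b → b ∈ insert v J) : ConnSet G (insert v J) := by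
  refine ⟨⟨v, by simp⟩, fun T hT hne hTcl => ?_⟩
  have hvT : v ∈ T := by
    by_contra hvT
    have hTJ : T ⊆ J := fun x hx => (Finset.mem_insert.1 (hT hx)).resolve_left
      fun e => hvT (e ▸ hx)
    have := h.2 T (hTJ.trans hJ) hne fun a ha b hb hab => hTcl a ha b (hcl a (hTJ ha) b hb hab) hab
    exact hvT (this ▸ hv)
  have hsub : insert v J ⊆ H := Finset.insert_subset hv hJ
  have := h.2 (T ∪ (H \ insert v J)) (Finset.union_subset (hT.trans hsub) Finset.sdiff_subset)
    (hne.mono Finset.subset_union_left) fun a ha b hb hab => by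
      rw [Finset.mem_union, Finset.mem_sdiff] at ha ⊢
      by_cases hbJ : b ∈ insert v J
      · left
        rcases ha with ha | ha
        · exact hTcl a ha b hbJ hab
        · rcases Finset.mem_insert.1 hbJ with rfl | hbJ
          · exact hvT
          · exact absurd (hcl b hbJ a ha.1 hab.symm) ha.2
      · exact Or.inr ⟨hb, hbJ⟩
  refine Finset.Subset.antisymm hT fun x hx => ?_
  have hx' := hsub hx
  rw [← this, Finset.mem_union, Finset.mem_sdiff] at hx'
  exact hx'.resolve_right fun e => e.2 hx

/-- A part of a connected set hanging at the cut vertex `v` contains a piece with long paths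
to `v`. -/
lemma ConnSet.exists_end_piece (h : ConnSet G H) (hv : v ∈ H) (hJ : J ⊆ H) (hvJ : v ∉ J)
    (hJne : J.Nonempty) (hcl : ∀ a ∈ J, ∀ b ∈ H, G.Adj a b → b ∈ insert v J) :
    ∃ (I : Finset V) (p w : V), I ⊆ J ∧ p ∈ insert v J ∧ p ∉ I ∧ w ∈ I ∧
      (∀ a ∈ I, ∀ b ∈ H, G.Adj a b → b ∈ I ∪ {p}) ∧ 1 ≤ degIn G H w ∧
      ∀ u ∈ I, LinkedIn G (insert v J) u v (degIn G H w) := by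
  have hR := h.insert_part hv hJ hvJ hcl
  have hvR : v ∈ insert v J := Finset.mem_insert_self _ _
  obtain ⟨I, p, hI⟩ := exists_isMinPiece (G := G) hvR (by
    intro e
    obtain ⟨x, hx⟩ := hJne
    have hx' : x ∈ insert v J := Finset.mem_insert_of_mem hx
    rw [e, Finset.mem_singleton] at hx'
    exact hvJ (hx' ▸ hx))
  have hIJ : I ⊆ J := fun x hx => (Finset.mem_insert.1 (hI.subset hx)).resolve_left
    fun e => hI.root (e ▸ hx)
  obtain ⟨w, hw, hmin⟩ := Finset.exists_min_image I (degIn G H) hI.nonempty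
  have hwH : w ∈ H := hJ (hIJ hw)
  refine ⟨I, p, w, hIJ, hI.attach, hI.attach_notMem, hw, ?_, ?_, ?_⟩
  · intro a ha b hb hab
    have := hI.closed a ha b (hcl a (hIJ ha) b hb hab) hab
    rw [Finset.mem_insert] at this
    rw [Finset.mem_union, Finset.mem_singleton]
    exact this.symm
  · refine h.degIn_pos hwH fun e => ?_
    rw [e, Finset.mem_singleton] at hv
    exact hvJ (hv ▸ hIJ hw)
  · intro u hu
    refine hI.linkedIn hR hvR (fun x hx => (hmin x hx).trans ?_) hu
    refine Finset.card_le_card fun b hb => ?_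
    rw [Finset.mem_filter] at hb ⊢
    exact ⟨hcl x (hIJ hx) b hb.1 hb.2, hb.2⟩

variable [NeZero n] {c : ZMod n → V} [Fintype V] {δ : ℕ}

/-- The circumference bound when a component off a longest cycle has a cut vertex. -/
lemma IsComp.bound_of_cut_vertex (hc : IsMaxCycle G c) (hH : IsComp G c H)
    (h4 : KConnected G 4) (hδ : ∀ v, δ ≤ (nbr G v).card) (hv : v ∈ H) (hcard : 3 ≤ H.card)
    (hcut : ¬ ConnSet G (H.erase v)) : 4 * δ ≤ n + 8 := by
  have hne : (H.erase v).Nonempty := by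
    rw [← Finset.card_pos, Finset.card_erase_of_mem hv]
    omega
  rw [ConnSet, not_and_or] at hcut
  have hcut := hcut.resolve_left (not_not.2 hne)
  push Not at hcut
  obtain ⟨T, hT, hTne, hTcl, hTn⟩ := hcut
  set T' := H.erase v \ T with hT'
  have hTH : T ⊆ H := hT.trans (Finset.erase_subset _ _)
  have hT'H : T' ⊆ H := Finset.sdiff_subset.trans (Finset.erase_subset _ _)
  have hvT : v ∉ T := fun e => by simpa using hT e
  have hvT' : v ∉ T' := fun e => by simpa using Finset.sdiff_subset e
  have hTT' : Disjoint T T' := Finset.disjoint_sdiff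
  obtain ⟨I, p, w, hIT, hpT, hpI, hwI, hIcl, hwpos, hlink⟩ := hH.conn.exists_end_piece hv hTH hvT
    hTne (fun a ha b hb hab => by
      by_cases hbv : b = v
      · simp [hbv]
      · exact Finset.mem_insert_of_mem (hTcl a ha b (Finset.mem_erase.2 ⟨hbv, hb⟩) hab))
  obtain ⟨I', p', w', hIT', hpT', hpI', hwI', hIcl', hwpos', hlink'⟩ :=
    hH.conn.exists_end_piece hv hT'H hvT' (by
      rw [hT', Finset.sdiff_nonempty]
      exact fun hh => hTn (Finset.Subset.antisymm hT hh)) (fun a ha b hb hab => by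
      by_cases hbv : b = v
      · simp [hbv]
      · refine Finset.mem_insert_of_mem (Finset.mem_sdiff.2 ⟨Finset.mem_erase.2 ⟨hbv, hb⟩, ?_⟩)
        intro hbT
        rw [hT', Finset.mem_sdiff] at ha
        exact ha.2 (hTcl b hbT a ha.1 hab.symm))
  have hIH := hIT.trans hTH
  have hIH' := hIT'.trans hT'H
  have hdisj : ∀ x, x ∈ insert v T → x ∈ insert v T' → x = v := fun x hx hx' => by
    rw [Finset.mem_insert] at hx hx'
    rcases hx with h | h
    · exact h
    · exact hx'.resolve_right (Finset.disjoint_left.1 hTT' h)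
  have hcross : ∀ x ∈ I, ∀ y ∈ I', LinkedIn G H x y (degIn G H w + degIn G H w') := by
    intro x hx y hy
    refine ((hlink x hx).trans (hlink' y hy).symm fun z hz => ?_).mono ?_ le_rfl
    · rw [Finset.mem_inter] at hz
      simpa using hdisj z hz.1 hz.2
    · exact Finset.union_subset (Finset.insert_subset hv hTH) (Finset.insert_subset hv hT'H)
  have hZ3 : 3 ≤ (att G c I).card := by
    have := hH.le_card_att h4 ⟨w, hwI⟩ hIH (E := {p}) (by simpa using hpI) hIcl (x := w')
      (fun e => Finset.disjoint_left.1 hTT' (hIT e) (hIT' hwI')) (by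
        rw [Finset.mem_singleton]
        rintro rfl
        exact hvT' (hdisj w' hpT (Finset.mem_insert_of_mem (hIT' hwI')) ▸ hIT' hwI'))
      (fun i _ e => hH.off i (e ▸ hIH' hwI'))
    rw [Finset.card_singleton] at this
    omega
  have hZ3' : 3 ≤ (att G c I').card := by
    have := hH.le_card_att h4 ⟨w', hwI'⟩ hIH' (E := {p'}) (by simpa using hpI') hIcl' (x := w)
      (fun e => Finset.disjoint_left.1 hTT' (hIT hwI) (hIT' e)) (by
        rw [Finset.mem_singleton]
        rintro rfl
        exact hvT (hdisj w (Finset.mem_insert_of_mem (hIT hwI)) hpT' ▸ hIT hwI))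
      (fun i _ e => hH.off i (e ▸ hIH hwI))
    rw [Finset.card_singleton] at this
    omega
  have hd := hH.le_degIn_add_card_att (hIH hwI) hwI hδ
  have hd' := hH.le_degIn_add_card_att (hIH' hwI') hwI' hδ
  have hU : att G c I ∪ att G c I' ⊆ att G c H :=
    Finset.union_subset (att_mono hIH) (att_mono hIH')
  have hU2 : 2 ≤ (att G c I ∪ att G c I').card := by
    have := Finset.card_le_card (Finset.subset_union_left (s₁ := att G c I) (s₂ := att G c I'))
    omega
  have hcount := weighted_gap_le (A := crossing (att G c I) (att G c I')) (B := ∅) (y := 0)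
    (Finset.filter_subset _ _) (by simp) (by simp) (hH.two_le_gap hc hU hU2)
    (hH.crossing_le hc hcross hU2) (by simp)
  have hie := Finset.card_union_add_card_inter (att G c I) (att G c I')
  by_cases hZ : att G c I = att G c I'
  · have hsub := Finset.card_le_card (inter_subset_crossing (att G c I) (att G c I'))
    rw [← hZ] at hcount hsub hd'
    simp only [Finset.union_self, Finset.inter_self, Finset.card_empty, mul_zero,
      add_zero] at hcount hsub
    have hmul := Nat.mul_le_mul_left (degIn G H w + degIn G H w') hsub
    generalize degIn G H w = D at *
    generalize degIn G H w' = D' at *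
    generalize (att G c I).card = z at *
    rcases le_total D D' with hDD | hDD
    · nlinarith
    · nlinarith
  · obtain ⟨hc2, hcs⟩ := card_crossing (Finset.card_pos.1 (by omega : 0 < (att G c I).card))
      (Finset.card_pos.1 (by omega : 0 < (att G c I').card)) hZ
    generalize (crossing (att G c I) (att G c I')).card = a at *
    generalize (att G c I ∩ att G c I').card = s at *
    simp only [Finset.card_empty, mul_zero, add_zero] at hcount
    generalize degIn G H w = D at *
    generalize degIn G H w' = D' at *
    have hm : 2 ≤ D + D' := by omega
    obtain ⟨m, hm⟩ := Nat.exists_eq_add_of_le hm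
    obtain ⟨b, rfl⟩ := Nat.exists_eq_add_of_le hc2
    rw [hm] at hcount
    have : (2 + m) * (2 + b) = 4 + 2 * m + 2 * b + m * b := by ring
    have := Nat.zero_le (m * b)
    omega

end LargeComponent

section TwoConnectedComponent

variable {G : SimpleGraph V} {n : ℕ} {H : Finset V}

/-- In a 2-connected set the root can be joined to any other vertex by a path whose length is at
least the minimum degree of the non-root vertices. -/
lemma linkedIn_of_two_connected (hH : ConnSet G H) (h2 : ∀ v ∈ H, ConnSet G (H.erase v)) {r u : V}
    {k : ℕ} (hr : r ∈ H) (hu : u ∈ H) (hur : u ≠ r)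
    (hk : ∀ w ∈ H, w ≠ r → k ≤ degIn G H w) : LinkedIn G H u r k := by
  obtain ⟨I, p, hI⟩ := exists_isMinPiece (G := G) hr (by
    intro e
    rw [e, Finset.mem_singleton] at hu
    exact hur hu)
  have hIp : I = H.erase p := by
    refine (h2 p hI.attach).2 I ?_ hI.nonempty fun a ha b hb hab => ?_
    · exact fun x hx => Finset.mem_erase.2 ⟨fun e => hI.attach_notMem (e ▸ hx), hI.subset hx⟩
    · rw [Finset.mem_erase] at hb
      exact (Finset.mem_insert.1 (hI.closed a ha b hb.2 hab)).resolve_left hb.1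
  have hpr : p = r := by
    by_contra hpr
    exact hI.root (hIp ▸ Finset.mem_erase.2 ⟨fun e => hpr e.symm, hr⟩)
  subst hpr
  refine hI.linkedIn hH hr (fun w hw => ?_) (hIp ▸ Finset.mem_erase.2 ⟨hur, hu⟩)
  rw [hIp, Finset.mem_erase] at hw
  exact hk w hw.2 hw.1

lemma two_le_degIn (hH : ConnSet G H) (h2 : ∀ v ∈ H, ConnSet G (H.erase v)) (h3 : 3 ≤ H.card)
    {w : V} (hw : w ∈ H) : 2 ≤ degIn G H w := by
  have h1 := hH.degIn_pos hw (by
    intro e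
    rw [e, Finset.card_singleton] at h3
    omega)
  rw [degIn, Nat.one_le_iff_ne_zero, Finset.card_ne_zero] at h1
  obtain ⟨y, hy⟩ := h1
  have hy' := Finset.mem_filter.1 hy
  have h1 := (h2 y hy'.1).degIn_pos (w := w) (Finset.mem_erase.2 ⟨hy'.2.ne, hw⟩) (by
    intro e
    have := Finset.card_erase_of_mem hy'.1
    rw [e, Finset.card_singleton] at this
    omega)
  rw [degIn, Finset.filter_erase, Finset.card_erase_of_mem hy] at h1
  rw [degIn]
  omega

variable [NeZero n] {c : ZMod n → V}

/-- The starts of segments whose ends have distinct neighbours in `H`. -/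
noncomputable def longStarts (G : SimpleGraph V) (c : ZMod n → V) (H : Finset V) :
    Finset (ZMod n) :=
  (att G c H).filter fun i => ∃ h ∈ H, ∃ h' ∈ H, h ≠ h' ∧ G.Adj (c i) h ∧
    G.Adj (c (nx (att G c H) i)) h'

variable [Fintype V] {δ : ℕ}

lemma IsComp.four_le_card_longStarts (hc : IsMaxCycle G c) (hH : IsComp G c H)
    (h4 : KConnected G 4) (hcard : 4 ≤ H.card) : 4 ≤ (longStarts G c H).card := by
  by_contra! hlt
  have hW := hH.four_le_card_att hc h4
  have hWne : (att G c H).Nonempty := Finset.card_pos.1 (by omega)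
  have hn : 4 ≤ n := by
    have := Finset.card_le_univ (att G c H)
    rw [ZMod.card] at this
    omega
  have hnotlong : ∀ i ∈ att G c H, i ∉ longStarts G c H → ∀ h ∈ H, ∀ h' ∈ H, G.Adj (c i) h →
      G.Adj (c (nx (att G c H) i)) h' → h = h' := by
    intro i hi hni h hh h' hh' ha ha'
    by_contra hne
    exact hni (Finset.mem_filter.2 ⟨hi, h, hh, h', hh', hne, ha, ha'⟩)
  let φ : ZMod n → V := fun i => if hx : ∃ h ∈ H, ∀ h' ∈ H, G.Adj (c i) h' → h' = h then
    hx.choose else c i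
  have hφ : ∀ i, ∀ h ∈ H, G.Adj (c i) h → (∀ h' ∈ H, G.Adj (c i) h' → h' = h) → φ i = h := by
    intro i h hh hih huniq
    have hx : ∃ h ∈ H, ∀ h' ∈ H, G.Adj (c i) h' → h' = h := ⟨h, hh, huniq⟩
    simp only [φ, dif_pos hx]
    exact (hx.choose_spec.2 h hh hih).symm
  have hφ' : ∀ i, ∀ h ∈ H, ∀ h' ∈ H, G.Adj (c i) h → G.Adj (c i) h' → h ≠ h' → φ i = c i := by
    intro i h hh h' hh' hih hih' hne
    have hx : ¬ ∃ h ∈ H, ∀ h' ∈ H, G.Adj (c i) h' → h' = h := by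
      rintro ⟨x, -, hx⟩
      exact hne ((hx h hh hih).trans (hx h' hh' hih').symm)
    simp only [φ, dif_neg hx]
  set F := (longStarts G c H).image φ with hF
  have hFcard : F.card < 4 := lt_of_le_of_lt Finset.card_image_le hlt
  have hcover : ∀ j, ∀ h ∈ H, G.Adj (c j) h → h ∈ F ∨ c j ∈ F := by
    intro j h hh hjh
    have hjW : j ∈ att G c H := mem_att.2 ⟨h, hh, hjh⟩
    by_cases hex : ∃ h' ∈ H, G.Adj (c j) h' ∧ h' ≠ h
    · right
      obtain ⟨h', hh', hjh', hne⟩ := hex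
      have hlong : j ∈ longStarts G c H := by
        by_contra hnl
        obtain ⟨x, hx, hjx⟩ := mem_att.1 (gap_spec hWne j).2
        exact hne ((hnotlong j hjW hnl h' hh' x hx hjh' hjx).trans
          (hnotlong j hjW hnl h hh x hx hjh hjx).symm)
      exact Finset.mem_image.2 ⟨j, hlong, hφ' j h hh h' hh' hjh hjh' hne.symm⟩
    · left
      push Not at hex
      by_contra hhF
      set T := (att G c H).filter fun i => G.Adj (c i) h ∧ ∀ h' ∈ H, G.Adj (c i) h' → h' = h
        with hT
      have hTW : T = att G c H := by
        refine eq_of_nx_closed (Finset.filter_subset _ _)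
          ⟨j, Finset.mem_filter.2 ⟨hjW, hjh, hex⟩⟩ fun i hi => ?_
        obtain ⟨hiW, hih, huniq⟩ := Finset.mem_filter.1 hi
        have hnl : i ∉ longStarts G c H := fun hl =>
          hhF (Finset.mem_image.2 ⟨i, hl, hφ i h hh hih huniq⟩)
        have hnx := (gap_spec hWne i).2
        have huniq' : ∀ h' ∈ H, G.Adj (c (nx (att G c H) i)) h' → h' = h := fun h' hh' ha =>
          (hnotlong i hiW hnl h hh h' hh' hih ha).symm
        obtain ⟨x, hx, hix⟩ := mem_att.1 hnx
        exact Finset.mem_filter.2 ⟨hnx, huniq' x hx hix ▸ hix, huniq'⟩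
      have hatt : att G c (H.erase h) = ∅ := by
        rw [Finset.eq_empty_iff_forall_notMem]
        intro i hi
        obtain ⟨x, hx, hix⟩ := mem_att.1 hi
        rw [Finset.mem_erase] at hx
        have hiT : i ∈ T := hTW ▸ mem_att.2 ⟨x, hx.2, hix⟩
        exact hx.1 ((Finset.mem_filter.1 hiT).2.2 x hx.2 hix)
      have := hH.le_card_att h4 (J := H.erase h) (E := {h}) (x := c 0)
        (by rw [← Finset.card_pos, Finset.card_erase_of_mem hh]; omega) (Finset.erase_subset _ _)
        (by simp) (fun a _ b hb _ => by
          rw [Finset.mem_union, Finset.mem_erase, Finset.mem_singleton]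
          tauto) (fun e => hH.off 0 (Finset.erase_subset _ _ e))
        (fun e => hH.off 0 (Finset.mem_singleton.1 e ▸ hh)) (by simp [hatt])
      rw [hatt] at this
      simp at this
  have hP : (H \ F).Nonempty := by
    rw [Finset.sdiff_nonempty]
    intro hsub
    have := Finset.card_le_card hsub
    omega
  have huniv := kConnected_cut h4 hP Finset.sdiff_disjoint (fun a ha b hab => by
    rw [Finset.mem_sdiff] at ha
    rw [Finset.mem_union, Finset.mem_sdiff]
    rcases hH.closed a ha.1 b hab with hb | ⟨k, rfl⟩
    · tauto
    · exact Or.inr ((hcover k a ha.1 hab.symm).resolve_left ha.2)) hFcard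
  have hCF : Finset.univ.image c ⊆ F := by
    intro x hx
    obtain ⟨k, -, rfl⟩ := Finset.mem_image.1 hx
    have : c k ∈ H \ F ∪ F := by simp [huniv]
    rw [Finset.mem_union, Finset.mem_sdiff] at this
    exact this.resolve_left fun e => hH.off k e.1
  have := Finset.card_le_card hCF
  rw [Finset.card_image_of_injective _ hc.inj, Finset.card_univ, ZMod.card] at this
  omega

lemma two_connected_arith {n δ D D' w z₁ z₂ s a b : ℕ} (hD2 : 2 ≤ D) (hDD : D ≤ D') (hW4 : 4 ≤ w)
    (hd : δ ≤ D + z₁) (hd' : δ ≤ D' + z₂) (hie : w + s = z₁ + z₂)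
    (hcount : 2 * w + D' * a + D * b ≤ n) (hlong4 : 3 ≤ D' → 4 ≤ b + a) (hLW : b + a ≤ w)
    (hcs : a ≥ z₁ ∧ z₁ = z₂ ∧ s = z₁ ∨ (0 < z₁ → 2 ≤ a ∧ s + 1 ≤ a)) : 4 * δ ≤ n + 8 := by
  obtain ⟨e, rfl⟩ := Nat.exists_eq_add_of_le hDD
  by_cases hδ : δ ≤ 4
  · have := Nat.zero_le ((D + e) * a)
    have := Nat.zero_le (D * b)
    omega
  rcases Nat.lt_or_ge (D + e) 3 with h3 | h3
  · obtain rfl : D = 2 := by omega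
    obtain rfl : e = 0 := by omega
    omega
  have h4 := hlong4 h3
  have hexp : (D + e) * a = D * a + e * a := by ring
  rcases Nat.lt_or_ge (D + 4) δ with hlt | hge
  · rcases hcs with ⟨h1, rfl, rfl⟩ | hcs
    · obtain ⟨f, rfl⟩ := Nat.exists_eq_add_of_lt hlt
      obtain ⟨g, rfl⟩ := Nat.exists_eq_add_of_le hD2
      have := Nat.mul_le_mul_left (2 + g) h1
      nlinarith
    · obtain ⟨ha2, has⟩ := hcs (by omega)
      rcases Nat.lt_or_ge a 4 with ha | ha
      · obtain ⟨f, hf⟩ : ∃ f, b = 4 - a + f := ⟨b - (4 - a), by omega⟩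
        have hb : D * b = D * (4 - a) + D * f := by rw [hf]; ring
        have := Nat.zero_le (D * f)
        obtain rfl | rfl : a = 2 ∨ a = 3 := by omega
        · omega
        · omega
      · obtain ⟨f, rfl⟩ := Nat.exists_eq_add_of_le ha
        obtain ⟨g, rfl⟩ := Nat.exists_eq_add_of_le hD2
        have := Nat.zero_le (g * f)
        have := Nat.zero_le (e * f)
        have := Nat.zero_le ((2 + g) * b)
        have : (2 + g + e) * (4 + f) = 8 + 4 * g + 4 * e + 2 * f + g * f + e * f := by ring
        omega
  · obtain ⟨f, hf⟩ := Nat.exists_eq_add_of_le h4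
    have := Nat.zero_le (e * a)
    have h5 : D * a + D * b = D * (b + a) := by ring
    rw [hf] at h5
    have h6 : D * (4 + f) = 4 * D + D * f := by ring
    have := Nat.zero_le (D * f)
    omega

/-- The circumference bound when a component off a longest cycle is 2-connected. -/
lemma IsComp.bound_of_two_connected (hc : IsMaxCycle G c) (hH : IsComp G c H)
    (h4 : KConnected G 4) (hδ : ∀ v, δ ≤ (nbr G v).card) (hcard : 3 ≤ H.card)
    (h2 : ∀ v ∈ H, ConnSet G (H.erase v)) : 4 * δ ≤ n + 8 := by
  obtain ⟨x, hx, hxmin⟩ := Finset.exists_min_image H (degIn G H) hH.conn.1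
  obtain ⟨y, hy, hymin⟩ := Finset.exists_min_image (H.erase x) (degIn G H) (h2 x hx).1
  have hyH : y ∈ H := Finset.erase_subset _ _ hy
  have hD2 := two_le_degIn hH.conn h2 hcard hx
  have hDD := hxmin y hyH
  have hlinkx : ∀ u ∈ ({x} : Finset V), ∀ v ∈ H.erase x, LinkedIn G H u v (degIn G H y) := by
    intro u hu v hv
    rw [Finset.mem_singleton] at hu
    subst hu
    rw [Finset.mem_erase] at hv
    exact (linkedIn_of_two_connected hH.conn h2 hx hv.2 hv.1 fun w hw hwx =>
      hymin w (Finset.mem_erase.2 ⟨hwx, hw⟩)).symm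
  have hlink : ∀ u ∈ H, ∀ v ∈ H, u ≠ v → LinkedIn G H u v (degIn G H x) := fun u hu v hv huv =>
    linkedIn_of_two_connected hH.conn h2 hv hu huv fun w hw _ => hxmin w hw
  have hW : att G c {x} ∪ att G c (H.erase x) = att G c H := by
    rw [← att_union, ← Finset.insert_eq, Finset.insert_erase hx]
  have hW4 := hH.four_le_card_att hc h4
  have hd := hH.le_degIn_add_card_att hx (Finset.mem_singleton_self x) hδ
  have hd' := hH.le_degIn_add_card_att hyH hy hδ
  have hgap2 := hH.two_le_gap hc (subset_refl (att G c H)) (by omega)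
  have hcross := hH.crossing_le hc hlinkx (by rw [hW]; omega)
  have hlong : ∀ i ∈ longStarts G c H, degIn G H x + 2 ≤ gap (att G c H) i := by
    intro i hi
    rw [longStarts, Finset.mem_filter] at hi
    obtain ⟨hiW, h, hh, h', hh', hne, ha, ha'⟩ := hi
    exact hc.insertion hH.off (gap_spec ⟨i, hiW⟩ i).1 (gap_lt (by omega) i)
      (hlink h hh h' hh' hne) ha ha'
  have hcsub : crossing (att G c {x}) (att G c (H.erase x)) ⊆ longStarts G c H := by
    intro i hi
    rw [crossing, Finset.mem_filter, hW] at hi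
    refine Finset.mem_filter.2 ⟨hi.1, ?_⟩
    rcases hi.2 with ⟨h1, h1'⟩ | ⟨h1, h1'⟩
    · obtain ⟨u, hu, hiu⟩ := mem_att.1 h1
      obtain ⟨v, hv, hiv⟩ := mem_att.1 h1'
      rw [Finset.mem_singleton] at hu
      subst hu
      rw [Finset.mem_erase] at hv
      exact ⟨u, hx, v, hv.2, hv.1.symm, hiu, hiv⟩
    · obtain ⟨u, hu, hiu⟩ := mem_att.1 h1
      obtain ⟨v, hv, hiv⟩ := mem_att.1 h1'
      rw [Finset.mem_singleton] at hv
      subst hv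
      rw [Finset.mem_erase] at hu
      exact ⟨u, hu.2, v, hx, hu.1, hiu, hiv⟩
  have hie := Finset.card_union_add_card_inter (att G c {x}) (att G c (H.erase x))
  have hlsub : longStarts G c H ⊆ att G c H := Finset.filter_subset _ _
  rw [hW] at hie hcross
  have hcount := weighted_gap_le (hcsub.trans hlsub)
    (Finset.sdiff_subset.trans hlsub : longStarts G c H \
      crossing (att G c {x}) (att G c (H.erase x)) ⊆ att G c H)
    Finset.disjoint_sdiff hgap2 hcross (fun i hi => hlong i (Finset.sdiff_subset hi))
  have hsd := Finset.card_sdiff_add_card_eq_card hcsub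
  have hlong4 : 3 ≤ degIn G H y → 4 ≤ (longStarts G c H).card := fun h3 => by
    refine hH.four_le_card_longStarts hc h4 ?_
    have hsub : insert y (H.filter (G.Adj y)) ⊆ H :=
      Finset.insert_subset hyH (Finset.filter_subset _ _)
    have := Finset.card_le_card hsub
    rw [Finset.card_insert_of_notMem (by simp)] at this
    rw [degIn] at h3
    omega
  have hZ2 : (att G c (H.erase x)).Nonempty := by
    by_contra hemp
    rw [Finset.not_nonempty_iff_eq_empty] at hemp
    have := hH.le_card_att h4 (J := H.erase x) (E := {x}) (x := c 0) (h2 x hx).1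
      (Finset.erase_subset _ _) (by simp) (fun a _ b hb _ => by
        rw [Finset.mem_union, Finset.mem_erase, Finset.mem_singleton]
        tauto) (fun e => hH.off 0 (Finset.erase_subset _ _ e))
      (fun e => hH.off 0 (Finset.mem_singleton.1 e ▸ hx)) (by simp [hemp])
    rw [hemp] at this
    simp at this
  have hLW := Finset.card_le_card hlsub
  have hcs : (att G c {x}).card ≤ (crossing (att G c {x}) (att G c (H.erase x))).card ∧
      (att G c {x}).card = (att G c (H.erase x)).card ∧
      (att G c {x} ∩ att G c (H.erase x)).card = (att G c {x}).card ∨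
      ((att G c {x}).Nonempty → 2 ≤ (crossing (att G c {x}) (att G c (H.erase x))).card ∧
        (att G c {x} ∩ att G c (H.erase x)).card + 1 ≤
          (crossing (att G c {x}) (att G c (H.erase x))).card) := by
    by_cases hZ : att G c {x} = att G c (H.erase x)
    · left
      have := inter_subset_crossing (att G c {x}) (att G c (H.erase x))
      rw [← hZ, Finset.inter_self] at this
      rw [← hZ, Finset.inter_self]
      exact ⟨Finset.card_le_card this, rfl, rfl⟩
    · exact Or.inr fun hne => card_crossing hne hZ2 hZ
  rw [← Finset.card_pos] at hcs
  clear hcross hlong hlsub hcsub hgap2 hlink hlinkx hymin hxmin hZ2 hδ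
  generalize (crossing (att G c {x}) (att G c (H.erase x))).card = a at *
  generalize (longStarts G c H \ crossing (att G c {x}) (att G c (H.erase x))).card = b at *
  generalize (longStarts G c H).card = L at *
  generalize (att G c {x} ∩ att G c (H.erase x)).card = s at *
  generalize (att G c {x}).card = z₁ at *
  generalize (att G c (H.erase x)).card = z₂ at *
  generalize (att G c H).card = w at *
  generalize degIn G H x = D at *
  generalize degIn G H y = D' at *
  subst hsd
  exact two_connected_arith hD2 hDD hW4 hd hd' hie hcount hlong4 hLW hcs

end TwoConnectedComponent

section OffEdge

variable {G : SimpleGraph V} {n : ℕ} {c : ZMod n → V}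

/-- `v` does not lie on the cycle `c`. -/
def Off (c : ZMod n → V) (v : V) : Prop := ∀ k, c k ≠ v

/-- Every vertex off the cycle `c` has at most one neighbour off the cycle. -/
def SparseOff (G : SimpleGraph V) (c : ZMod n → V) : Prop :=
  ∀ z a b, Off c z → Off c a → Off c b → G.Adj z a → G.Adj z b → a = b

/-- `xy` is an edge off the cycle `c`. -/
structure IsOffEdge (G : SimpleGraph V) (c : ZMod n → V) (x y : V) : Prop where
  sparse : SparseOff G c
  adj : G.Adj x y
  left : Off c x
  right : Off c y

variable {x y z : V}

lemma IsOffEdge.symm (h : IsOffEdge G c x y) : IsOffEdge G c y x :=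
  ⟨h.sparse, h.adj.symm, h.right, h.left⟩

lemma IsOffEdge.isComp (h : IsOffEdge G c x y) : IsComp G c {x, y} := by
  have hxy := h.adj.ne
  refine ⟨⟨⟨x, by simp⟩, fun T hT hne hcl => ?_⟩, fun k hk => ?_, fun a ha b hab => ?_⟩
  · obtain ⟨t, ht⟩ := hne
    have hx : x ∈ T := by
      have := hT ht
      rw [Finset.mem_insert, Finset.mem_singleton] at this
      rcases this with rfl | rfl
      · exact ht
      · exact hcl _ ht _ (by simp) h.adj.symm
    have hy : y ∈ T := hcl x hx y (by simp) h.adj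
    refine Finset.Subset.antisymm hT (Finset.insert_subset hx (by simpa using hy))
  · rw [Finset.mem_insert, Finset.mem_singleton] at hk
    rcases hk with hk | hk
    · exact h.left k hk
    · exact h.right k hk
  · by_cases hb : Off c b
    · left
      rw [Finset.mem_insert, Finset.mem_singleton] at ha ⊢
      rcases ha with rfl | rfl
      · exact Or.inr (h.sparse a b y h.left hb h.right hab h.adj)
      · exact Or.inl (h.sparse a b x h.right hb h.left hab h.adj.symm)
    · right
      simpa [Off] using hb

lemma isComp_singleton (hz : Off c z) (hno : ∀ a, Off c a → ¬ G.Adj z a) : IsComp G c {z} := by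
  refine ⟨⟨⟨z, by simp⟩, fun T hT hne _ => ?_⟩, fun k hk => hz k (by simpa using hk),
    fun a ha b hab => ?_⟩
  · exact (Finset.subset_singleton_iff.1 hT).resolve_left hne.ne_empty
  · rw [Finset.mem_singleton] at ha
    subst ha
    right
    by_contra hb
    exact hno b (by simpa [Off] using hb) hab

variable [NeZero n]

@[simp] lemma mem_att_singleton {i : ZMod n} : i ∈ att G c {x} ↔ G.Adj (c i) x := by
  simp [mem_att]

lemma att_union_subset :
    att G c {x} ∪ att G c {y} ⊆ att G c {x, y} :=
  Finset.union_subset (att_mono (by simp)) (att_mono (by simp))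

lemma IsComp.succ_notMem (hc : IsMaxCycle G c) {H : Finset V} (hH : IsComp G c H) {i : ZMod n}
    (hi : i ∈ att G c H) : i + 1 ∉ att G c H := by
  intro hi1
  obtain ⟨u, hu, hiu⟩ := mem_att.1 hi
  obtain ⟨v, hv, hiv⟩ := mem_att.1 hi1
  have h3 := hc.three_le
  have := hc.insertion hH.off le_rfl (by omega) (hH.conn.linkedIn hu hv) hiu (by simpa using hiv)
  omega

lemma IsOffEdge.succ_notMem (hc : IsMaxCycle G c) (h : IsOffEdge G c x y) {i : ZMod n}
    (hi : i ∈ att G c {x} ∪ att G c {y}) : i + 1 ∉ att G c {x} ∪ att G c {y} :=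
  fun hi1 => h.isComp.succ_notMem hc (att_union_subset hi) (att_union_subset hi1)

lemma IsOffEdge.three_le (hc : IsMaxCycle G c) (h : IsOffEdge G c x y) {i : ZMod n} {t : ℕ}
    (ht : 1 ≤ t) (htn : t < n) (hi : i ∈ att G c {x} ∩ att G c {y})
    (hit : i + (t : ZMod n) ∈ att G c {x} ∪ att G c {y}) : 3 ≤ t := by
  have hlink : LinkedIn G {x, y} x y 1 :=
    (LinkedIn.refl (Finset.mem_singleton_self y)).cons (by simpa using h.adj.ne) h.adj
  rw [Finset.mem_inter, mem_att_singleton, mem_att_singleton] at hi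
  rw [Finset.mem_union, mem_att_singleton, mem_att_singleton] at hit
  rcases hit with hit | hit
  · exact hc.insertion h.isComp.off ht htn hlink.symm hi.2 hit
  · exact hc.insertion h.isComp.off ht htn hlink hi.1 hit

lemma IsOffEdge.add_two_notMem (hc : IsMaxCycle G c) (h : IsOffEdge G c x y) {i : ZMod n}
    (hi : i ∈ att G c {x} ∩ att G c {y}) : i + 2 ∉ att G c {x} ∪ att G c {y} := by
  intro hi2
  have := h.three_le hc (t := 2) (by omega) (by have := hc.three_le; omega) hi (by simpa using hi2)
  omega

variable [Fintype V] {δ : ℕ}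

lemma IsOffEdge.le_card_att (h : IsOffEdge G c x y) (hδ : ∀ v, δ ≤ (nbr G v).card) :
    δ ≤ (att G c {x}).card + 1 := by
  have h1 := h.isComp.le_degIn_add_card_att (w := x) (by simp) (Finset.mem_singleton_self x) hδ
  have h2 : degIn G {x, y} x ≤ 1 := by
    have : ({x, y} : Finset V).filter (G.Adj x) ⊆ {y} := by
      intro b hb
      rw [Finset.mem_filter, Finset.mem_insert, Finset.mem_singleton] at hb
      rcases hb with ⟨rfl | rfl, hb⟩
      · simp at hb
      · simp
    simpa [degIn] using Finset.card_le_card this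
  omega

lemma IsOffEdge.two_le_card (hc : IsMaxCycle G c) (h : IsOffEdge G c x y)
    (h4 : KConnected G 4) : 2 ≤ (att G c {x} ∪ att G c {y}).card := by
  have := h.isComp.four_le_card_att hc h4
  rw [Finset.insert_eq, att_union] at this
  omega

lemma IsOffEdge.three_le_gap (hc : IsMaxCycle G c) (h : IsOffEdge G c x y) (h4 : KConnected G 4)
    (i : ZMod n) (hi : i ∈ att G c {x} ∩ att G c {y}) :
    3 ≤ gap (att G c {x} ∪ att G c {y}) i := by
  have hiU : i ∈ att G c {x} ∪ att G c {y} :=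
    Finset.mem_union_left _ (Finset.mem_inter.1 hi).1
  have hg := gap_spec ⟨i, hiU⟩ i
  exact h.three_le hc hg.1 (gap_lt (h.two_le_card hc h4) i) hi hg.2

lemma IsOffEdge.card_le (hc : IsMaxCycle G c) (h : IsOffEdge G c x y) (h4 : KConnected G 4) :
    2 * (att G c {x} ∪ att G c {y}).card + (att G c {x} ∩ att G c {y}).card ≤ n := by
  have := weighted_gap_le (A := att G c {x} ∩ att G c {y}) (B := ∅) (y := 0) (x := 1)
    (Finset.inter_subset_left.trans Finset.subset_union_left) (by simp) (by simp)
    (h.isComp.two_le_gap hc att_union_subset (h.two_le_card hc h4)) (h.three_le_gap hc h4) (by simp)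
  simpa using this

end OffEdge

section Crossing

variable {G : SimpleGraph V} {n : ℕ} {c : ZMod n → V} {H : Finset V} {i j : ZMod n}

lemma IsMaxCycle.isPathList_arc_of_eq (hc : IsMaxCycle G c) {k : ℕ} (hk : 1 ≤ k) (hkn : k ≤ n)
    (hj : i + k = j + 1) : IsPathList G (arcSet c i k) (c i) (c j) (arc c i k) := by
  obtain ⟨m, rfl⟩ := Nat.exists_eq_add_of_le' hk
  have : j = i + (m : ZMod n) := by
    push_cast at hj
    linear_combination -hj
  rw [this]
  exact hc.isPathList_arc i (by omega)

lemma IsMaxCycle.disjoint_arcSet_of_eq (hc : IsMaxCycle G c) {d s t : ℕ}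
    (hj : j = i + (d : ZMod n)) (hs : s ≤ d) (ht : d + t ≤ n) :
    Disjoint (arcSet c i s) (arcSet c j t) := by
  subst hj
  refine (hc.disjoint_arcSet i ht).mono_left fun v hv => ?_
  obtain ⟨k, hk, rfl⟩ := mem_arcSet.1 hv
  exact mem_arcSet.2 ⟨k, by omega, rfl⟩

variable [NeZero n]

/-- The successors of two attachment vertices of a component off a longest cycle have no crossing
pair of edges towards consecutive vertices. -/
lemma IsComp.not_crossing (hc : IsMaxCycle G c) (hH : IsComp G c H) {p e : ℕ}
    (hj : j = i + (p : ZMod n)) (hi : i ∈ att G c H) (hj' : j ∈ att G c H) (he : 1 ≤ e)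
    (hep : e < p) (hpn : p < n) (h1 : G.Adj (c (i + 1)) (c (i + e + 1))) :
    ¬ G.Adj (c (j + 1)) (c (i + e)) := by
  intro h2
  obtain ⟨v, hv, hiv⟩ := mem_att.1 hi
  obtain ⟨u, hu, hju⟩ := mem_att.1 hj'
  obtain ⟨q, hq, hlen⟩ := hH.conn.linkedIn hv hu
  have hn0 : (((n - p : ℕ) : ZMod n)) + p = 0 := by
    rw [← Nat.cast_add, Nat.sub_add_cancel hpn.le, ZMod.natCast_self]
  have hp0 : (((p - e : ℕ) : ZMod n)) + e = p := by
    rw [← Nat.cast_add, Nat.sub_add_cancel hep.le]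
  have a1 := hc.isPathList_arc_of_eq (i := i + 1) (j := i + (e : ZMod n)) (k := e) he (by omega) (by ring)
  have a2 := hc.isPathList_arc_of_eq (i := j + 1) (j := i) (k := n - p) (by omega) (by omega)
    (by rw [hj]; linear_combination hn0)
  have a3 := hc.isPathList_arc_of_eq (i := i + (e : ZMod n) + 1) (j := j) (k := p - e) (by omega) (by omega)
    (by rw [hj]; linear_combination hp0)
  have d13 := hc.disjoint_arcSet_of_eq (i := i + 1) (j := i + (e : ZMod n) + 1) (s := e) (t := p - e) (d := e)
    (by ring) le_rfl (by omega)
  have d12 := hc.disjoint_arcSet_of_eq (i := i + 1) (j := j + 1) (s := e) (t := n - p) (d := p)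
    (by rw [hj]; ring) (by omega) (by omega)
  have d32 := hc.disjoint_arcSet_of_eq (i := i + (e : ZMod n) + 1) (j := j + 1) (s := p - e) (t := n - p)
    (d := p - e) (by rw [hj]; linear_combination -hp0) le_rfl (by omega)
  have b := a1.append a2 d12 h2.symm
  have b' := b.append hq (by
    rw [Finset.disjoint_union_left]
    exact ⟨(disjoint_arcSet_of_off hH.off _ _).symm, (disjoint_arcSet_of_off hH.off _ _).symm⟩) hiv
  have b'' := b'.append a3.reverse (by
    simp only [Finset.disjoint_union_left]
    exact ⟨⟨d13, d32.symm⟩, disjoint_arcSet_of_off hH.off _ _⟩) hju.symm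
  have hq1 : 1 ≤ q.length := List.length_pos_iff.2 hq.ne_nil
  have h3 := hc.three_le
  have := hc.max _ (b''.isCycleList h1.symm (by simp; omega))
  simp at this
  omega

/-- The successors of two attachment vertices of a component off a longest cycle have no common
neighbour off the cycle. -/
lemma IsComp.not_common_off (hc : IsMaxCycle G c) (hH : IsComp G c H) {z : V} (hz : Off c z)
    (hi : i ∈ att G c H) (hj : j ∈ att G c H) (hij : i ≠ j) (h1 : G.Adj (c (i + 1)) z) :
    ¬ G.Adj (c (j + 1)) z := by
  intro h2
  have hzH : z ∉ H := fun hzH => hH.succ_notMem hc hi (mem_att.2 ⟨z, hzH, h1⟩)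
  obtain ⟨p, hpn, hjp⟩ := exists_step i j
  have hp : 1 ≤ p := by
    rcases Nat.eq_zero_or_pos p with rfl | h
    · simp [eq_comm, hij] at hjp
    · exact h
  obtain ⟨v, hv, hiv⟩ := mem_att.1 hi
  obtain ⟨u, hu, hju⟩ := mem_att.1 hj
  obtain ⟨q, hq, hlen⟩ := hH.conn.linkedIn hu hv
  have hn0 : (((n - p : ℕ) : ZMod n)) + p = 0 := by
    rw [← Nat.cast_add, Nat.sub_add_cancel hpn.le, ZMod.natCast_self]
  have a1 := hc.isPathList_arc_of_eq (i := i + 1) (j := j) (k := p) hp (by omega)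
    (by rw [hjp]; ring)
  have a2 := hc.isPathList_arc_of_eq (i := j + 1) (j := i) (k := n - p) (by omega) (by omega)
    (by rw [hjp]; linear_combination hn0)
  have d12 := hc.disjoint_arcSet_of_eq (i := i + 1) (j := j + 1) (s := p) (t := n - p) (d := p)
    (by rw [hjp]; ring) (by omega) (by omega)
  have b := a1.append hq (disjoint_arcSet_of_off hH.off _ _).symm hju
  have b' := b.append a2.reverse (by
    rw [Finset.disjoint_union_left]
    exact ⟨d12, disjoint_arcSet_of_off hH.off _ _⟩) hiv.symm
  have hz' : ∀ k, c k ∉ ({z} : Finset V) := fun k hk => hz k (by simpa using hk)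
  obtain ⟨r, hr, -⟩ := LinkedIn.refl (G := G) (Finset.mem_singleton_self z)
  have b'' := b'.append hr (by
    simp only [Finset.disjoint_union_left]
    exact ⟨⟨(disjoint_arcSet_of_off hz' _ _).symm, by simpa using hzH⟩,
      (disjoint_arcSet_of_off hz' _ _).symm⟩) h2
  have hq1 : 1 ≤ q.length := List.length_pos_iff.2 hq.ne_nil
  have hr1 : 1 ≤ r.length := List.length_pos_iff.2 hr.ne_nil
  have h3 := hc.three_le
  have := hc.max _ (b''.isCycleList h1.symm (by simp; omega))
  simp at this
  omega

end Crossing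

section Cut

/-- `S` separates `A` from `B` in `G`. -/
structure IsCut (G : SimpleGraph V) (A B S : Finset V) : Prop where
  left_right : Disjoint A B
  left_sep : Disjoint A S
  right_sep : Disjoint B S
  cover : ∀ v, v ∈ A ∨ v ∈ B ∨ v ∈ S
  not_adj : ∀ a ∈ A, ∀ b ∈ B, ¬ G.Adj a b

lemma IsCut.symm {G : SimpleGraph V} {A B S : Finset V} (h : IsCut G A B S) : IsCut G B A S :=
  ⟨h.left_right.symm, h.right_sep, h.left_sep, fun v => by have := h.cover v; tauto,
    fun a ha b hb hab => h.not_adj b hb a ha hab.symm⟩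

variable {n : ℕ}

/-- The separator vertices off the cycle `c`. -/
noncomputable def offPart (c : ZMod n → V) (S : Finset V) : Finset V :=
  S.filter (Off c)

lemma mem_offPart {c : ZMod n → V} {S : Finset V} {v : V} : v ∈ offPart c S ↔ v ∈ S ∧ Off c v := by
  simp [offPart]

lemma card_add_card_le_of_not_crossing {i j : ZMod n} {P X Y E : Finset (ZMod n)}
    (hP : ∀ k ∈ P, k - 1 ∉ P → k = i + 1) (hP' : ∀ k ∉ P, k - 1 ∈ P → k = j + 1)
    (hi : i + 1 ∉ X) (hj : j + 1 ∉ Y) (hX : ∀ k ∈ X, k ∈ E ∧ k - 1 ∈ E)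
    (hY : ∀ k ∈ Y, k ∈ E ∧ k - 1 ∈ E) (hYX : ∀ k ∈ P, k + 1 ∈ P → k ∈ Y → k + 1 ∉ X)
    (hXY : ∀ k ∉ P, k + 1 ∉ P → k ∈ X → k + 1 ∉ Y) : X.card + Y.card ≤ E.card := by
  set f : ZMod n → ZMod n := fun k => if k ∈ P then k - 1 else k with hf
  set g : ZMod n → ZMod n := fun k => if k ∈ P then k else k - 1 with hg
  have hfinj : Set.InjOn f X := by
    intro k hk l hl h
    simp only [hf] at h
    split_ifs at h with h1 h2 h2
    · exact sub_left_injective h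
    · subst h
      exact absurd (hP k h1 h2 ▸ hk) hi
    · subst h
      exact absurd (hP l h2 h1 ▸ hl) hi
    · exact h
  have hginj : Set.InjOn g Y := by
    intro k hk l hl h
    simp only [hg] at h
    split_ifs at h with h1 h2 h2
    · exact h
    · subst h
      exact absurd (hP' l h2 h1 ▸ hl) hj
    · subst h
      exact absurd (hP' k h1 h2 ▸ hk) hj
    · exact sub_left_injective h
  rw [← Finset.card_image_of_injOn hfinj, ← Finset.card_image_of_injOn hginj,
    ← Finset.card_union_of_disjoint]
  · refine Finset.card_le_card (Finset.union_subset ?_ ?_)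
    · intro m hm
      obtain ⟨k, hk, rfl⟩ := Finset.mem_image.1 hm
      simp only [hf]
      split_ifs
      · exact (hX k hk).2
      · exact (hX k hk).1
    · intro m hm
      obtain ⟨k, hk, rfl⟩ := Finset.mem_image.1 hm
      simp only [hg]
      split_ifs
      · exact (hY k hk).1
      · exact (hY k hk).2
  · rw [Finset.disjoint_left]
    intro m hm hm'
    obtain ⟨k, hk, rfl⟩ := Finset.mem_image.1 hm
    obtain ⟨l, hl, h⟩ := Finset.mem_image.1 hm'
    simp only [hf, hg] at h
    split_ifs at h with h1 h2 h2
    · subst h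
      exact hYX _ h1 (by simpa using h2) hl (by simpa using hk)
    · subst h
      exact h2 h1
    · have := sub_left_injective h
      subst this
      exact h1 h2
    · subst h
      exact hXY _ h2 (by simpa using h1) hk (by simpa using hl)

lemma IsComp.reverse {G : SimpleGraph V} {c : ZMod n → V} {H : Finset V}
    (hH : IsComp G c H) : IsComp G (fun k => c (-k)) H := by
  refine ⟨hH.conn, fun k => hH.off _, fun a ha b hab => (hH.closed a ha b hab).imp_right ?_⟩
  rintro ⟨k, rfl⟩
  exact ⟨-k, by simp⟩

lemma off_reverse {c : ZMod n → V} : Off (fun k => c (-k)) = Off c := by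
  ext v
  exact ⟨fun h k => by simpa using h (-k), fun h k => h _⟩

variable [NeZero n]

/-- The positions of the edges of the cycle `c` not contained in `B`. -/
noncomputable def outerEdges (c : ZMod n → V) (B : Finset V) : Finset (ZMod n) :=
  Finset.univ.filter fun k => ¬ (c k ∈ B ∧ c (k + 1) ∈ B)

variable {G : SimpleGraph V} {c : ZMod n → V} {A B S H : Finset V} {δ : ℕ} {i j k : ZMod n}

lemma mem_outerEdges : k ∈ outerEdges c B ↔ ¬ (c k ∈ B ∧ c (k + 1) ∈ B) := by
  simp [outerEdges]

lemma IsCut.mem_outerEdges_of_mem_att (hcut : IsCut G A B S) {a : V} (ha : a ∈ A)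
    (hk : k ∈ att G c {a}) : k ∈ outerEdges c B ∧ k - 1 ∈ outerEdges c B := by
  have hkB : c k ∉ B := fun hkB => hcut.not_adj a ha _ hkB (mem_att_singleton.1 hk).symm
  refine ⟨mem_outerEdges.2 fun h => hkB h.1, mem_outerEdges.2 fun h => hkB ?_⟩
  simpa using h.2

lemma card_nbr_le [Fintype V] (c : ZMod n → V) (b : V) :
    (nbr G b).card ≤ ((nbr G b).filter (Off c)).card + (att G c {b}).card := by
  have : nbr G b ⊆ (nbr G b).filter (Off c) ∪ (att G c {b}).image c := by
    intro v hv
    rw [Finset.mem_union, Finset.mem_filter, Finset.mem_image]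
    by_cases h : Off c v
    · exact Or.inl ⟨hv, h⟩
    · right
      simp only [Off, not_forall, not_not] at h
      obtain ⟨k, rfl⟩ := h
      exact ⟨k, mem_att_singleton.2 (mem_nbr.1 hv).symm, rfl⟩
  have h1 := (Finset.card_le_card this).trans (Finset.card_union_le _ _)
  have h2 : ((att G c {b}).image c).card ≤ _ := Finset.card_image_le
  omega

/-- If the separated part `A` lies on the longest cycle and contains the successors of two
attachment vertices, then many edges of the cycle leave the other part. -/
lemma IsCut.two_mul_le_of_succ [Fintype V] (hcut : IsCut G A B S) (hc : IsMaxCycle G c)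
    (hH : IsComp G c H) (hδ : ∀ v, δ ≤ (nbr G v).card) (hA : ∀ a ∈ A, ¬ Off c a)
    (hi : i ∈ att G c H) (hj : j ∈ att G c H) (hij : i ≠ j) (hiA : c (i + 1) ∈ A)
    (hjA : c (j + 1) ∈ A) : 2 * δ ≤ (outerEdges c B).card + (offPart c S).card := by
  have hoff : ((nbr G (c (i + 1))).filter (Off c)).card +
      ((nbr G (c (j + 1))).filter (Off c)).card ≤ (offPart c S).card := by
    rw [← Finset.card_union_of_disjoint]
    · have key : ∀ a ∈ A, (nbr G a).filter (Off c) ⊆ offPart c S := by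
        intro a ha z hz
        rw [Finset.mem_filter, mem_nbr] at hz
        rcases hcut.cover z with h | h | h
        · exact absurd hz.2 (hA z h)
        · exact absurd hz.1 (hcut.not_adj a ha z h)
        · exact mem_offPart.2 ⟨h, hz.2⟩
      exact Finset.card_le_card (Finset.union_subset (key _ hiA) (key _ hjA))
    · rw [Finset.disjoint_left]
      intro z hz hz'
      rw [Finset.mem_filter, mem_nbr] at hz hz'
      exact hH.not_common_off hc hz.2 hi hj hij hz.1 hz'.1
  have hon : (att G c {c (i + 1)}).card + (att G c {c (j + 1)}).card ≤ (outerEdges c B).card := by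
    obtain ⟨p, hpn, hjp⟩ := exists_step i j
    have hp : 1 ≤ p := by
      rcases Nat.eq_zero_or_pos p with rfl | h
      · simp [eq_comm, hij] at hjp
      · exact h
    have hn0 : (((n - p : ℕ) : ZMod n)) + p = 0 := by
      rw [← Nat.cast_add, Nat.sub_add_cancel hpn.le, ZMod.natCast_self]
    set P : Finset (ZMod n) :=
      Finset.univ.filter fun k => ∃ e : ℕ, 1 ≤ e ∧ e ≤ p ∧ k = i + (e : ZMod n) with hPdef
    have hmem : ∀ k, k ∈ P ↔ ∃ e : ℕ, 1 ≤ e ∧ e ≤ p ∧ k = i + (e : ZMod n) := by simp [hPdef]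
    have hnot : ∀ k ∉ P, ∃ e : ℕ, 1 ≤ e ∧ e ≤ n - p ∧ k = j + (e : ZMod n) := by
      intro k hk
      obtain ⟨t, ht, hkt⟩ := exists_step i k
      rcases Nat.eq_zero_or_pos t with rfl | h0
      · exact ⟨n - p, by omega, le_rfl, by rw [hkt, hjp]; push_cast; linear_combination -hn0⟩
      · by_cases htp : t ≤ p
        · exact absurd ((hmem k).2 ⟨t, h0, htp, hkt⟩) hk
        · refine ⟨t - p, by omega, by omega, ?_⟩
          rw [hkt, hjp, Nat.cast_sub (by omega)]
          ring
    have hi1 : i + 1 ∈ P := (hmem _).2 ⟨1, le_rfl, hp, by simp⟩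
    have hj1 : j + 1 ∉ P := by
      intro h
      obtain ⟨e, h1, h2, h3⟩ := (hmem _).1 h
      obtain ⟨m, rfl⟩ := Nat.exists_eq_add_of_le' h1
      have : (p : ZMod n) = m := by
        rw [hjp] at h3
        push_cast at h3
        linear_combination h3
      have := natCast_inj_of_lt hpn (by omega) this
      omega
    refine card_add_card_le_of_not_crossing (P := P) (i := i) (j := j) ?_ ?_ ?_ ?_
      (fun k => hcut.mem_outerEdges_of_mem_att hiA) (fun k => hcut.mem_outerEdges_of_mem_att hjA)
      ?_ ?_
    · intro k hk hk1
      obtain ⟨e, h1, h2, rfl⟩ := (hmem _).1 hk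
      by_contra hne
      refine hk1 ((hmem _).2 ⟨e - 1, ?_, by omega, by rw [Nat.cast_sub h1]; push_cast; ring⟩)
      rcases Nat.lt_or_ge 1 e with h | h
      · omega
      · obtain rfl : e = 1 := by omega
        simp at hne
    · intro k hk hk1
      obtain ⟨e, h1, h2, h3⟩ := (hmem _).1 hk1
      have hke : k = i + ((e + 1 : ℕ) : ZMod n) := by
        push_cast
        linear_combination h3
      have : e = p := by
        by_contra hne
        exact hk ((hmem _).2 ⟨e + 1, by omega, by omega, hke⟩)
      rw [hke, this, hjp]
      push_cast
      ring
    · rw [mem_att_singleton]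
      exact G.irrefl
    · rw [mem_att_singleton]
      exact G.irrefl
    · intro k hk hk1 hkj hki
      obtain ⟨e, h1, h2, rfl⟩ := (hmem _).1 hk
      have hep : e < p := by
        refine lt_of_le_of_ne h2 ?_
        rintro rfl
        exact hj1 (hjp ▸ hk1)
      rw [mem_att_singleton] at hkj hki
      exact hH.not_crossing hc hjp hi hj h1 hep hpn hki.symm hkj.symm
    · intro k hk hk1 hki hkj
      obtain ⟨e, h1, h2, rfl⟩ := hnot k hk
      have hij' : i = j + ((n - p : ℕ) : ZMod n) := by
        rw [hjp]
        linear_combination -hn0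
      have hep : e < n - p := by
        refine lt_of_le_of_ne h2 ?_
        rintro rfl
        exact hk1 (hij' ▸ hi1)
      rw [mem_att_singleton] at hkj hki
      exact hH.not_crossing hc hij' hj hi h1 hep (by omega) hkj.symm hki.symm
  have d1 := (hδ (c (i + 1))).trans (card_nbr_le c _)
  have d2 := (hδ (c (j + 1))).trans (card_nbr_le c _)
  omega

lemma mem_att_reverse {J : Finset V} : k ∈ att G (fun k => c (-k)) J ↔ -k ∈ att G c J := by
  rw [mem_att, mem_att]

lemma card_outerEdges_reverse :
    (outerEdges (fun k => c (-k)) B).card = (outerEdges c B).card := by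
  refine Finset.card_bij' (fun k _ => -k - 1) (fun k _ => -k - 1) ?_ ?_ (by simp) (by simp)
  · intro k hk
    rw [mem_outerEdges] at hk ⊢
    rw [sub_add_cancel]
    rw [neg_add', and_comm] at hk
    exact hk
  · intro k hk
    rw [mem_outerEdges] at hk ⊢
    rw [sub_add_cancel, neg_sub, sub_neg_eq_add, neg_neg, and_comm, add_comm]
    exact hk

lemma IsCut.two_mul_le_of_pred [Fintype V] (hcut : IsCut G A B S) (hc : IsMaxCycle G c)
    (hH : IsComp G c H) (hδ : ∀ v, δ ≤ (nbr G v).card) (hA : ∀ a ∈ A, ¬ Off c a)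
    (hi : i ∈ att G c H) (hj : j ∈ att G c H) (hij : i ≠ j) (hiA : c (i - 1) ∈ A)
    (hjA : c (j - 1) ∈ A) : 2 * δ ≤ (outerEdges c B).card + (offPart c S).card := by
  have := hcut.two_mul_le_of_succ hc.reverse hH.reverse hδ (by rwa [off_reverse])
    (i := -i) (j := -j) (by rwa [mem_att_reverse, neg_neg]) (by rwa [mem_att_reverse, neg_neg])
    (by simpa using hij) (by simpa [neg_add', sub_eq_add_neg, add_comm] using hiA)
    (by simpa [neg_add', sub_eq_add_neg, add_comm] using hjA)
  rwa [card_outerEdges_reverse, offPart, off_reverse] at this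

end Cut

section OffCut

lemma card_image_add {n : ℕ} (T : Finset (ZMod n)) (a : ZMod n) : (T.image (· + a)).card = T.card :=
  Finset.card_image_of_injective _ (add_left_injective a)

variable {n : ℕ} [NeZero n] {G : SimpleGraph V} {c : ZMod n → V} {A B S : Finset V} {δ κ : ℕ}
  {x y : V}

/-- The positions on the cycle `c` of the vertices of `T`. -/
noncomputable def posIn (c : ZMod n → V) (T : Finset V) : Finset (ZMod n) :=
  Finset.univ.filter fun k => c k ∈ T

lemma mem_posIn {T : Finset V} {k : ZMod n} : k ∈ posIn c T ↔ c k ∈ T := by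
  simp [posIn]

lemma IsMaxCycle.card_posIn_add (hc : IsMaxCycle G c) (T : Finset V) :
    (posIn c T).card + (offPart c T).card = T.card := by
  rw [← Finset.card_image_of_injective _ hc.inj, ← Finset.card_union_of_disjoint]
  · congr 1
    ext v
    rw [Finset.mem_union, Finset.mem_image, mem_offPart]
    constructor
    · rintro (⟨k, hk, rfl⟩ | h)
      · exact mem_posIn.1 hk
      · exact h.1
    · intro hv
      by_cases h : Off c v
      · exact Or.inr ⟨hv, h⟩
      · simp only [Off, not_forall, not_not] at h
        obtain ⟨k, rfl⟩ := h
        exact Or.inl ⟨k, mem_posIn.2 hv, rfl⟩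
  · rw [Finset.disjoint_left]
    intro v hv hv'
    obtain ⟨k, -, rfl⟩ := Finset.mem_image.1 hv
    exact (mem_offPart.1 hv').2 k rfl

variable [Fintype V]

/-- In a short longest cycle, the ends of an off edge have many common attachments. -/
lemma IsOffEdge.two_mul_le_card_inter (hc : IsMaxCycle G c) (h : IsOffEdge G c x y)
    (h4 : KConnected G 4) (hδ : ∀ v, δ ≤ (nbr G v).card) (hn : n + 2 * κ < 4 * δ) :
    2 * κ ≤ (att G c {x} ∩ att G c {y}).card + 3 := by
  have h1 := h.card_le hc h4
  have h2 := h.le_card_att hδ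
  have h3 := h.symm.le_card_att hδ
  have h5 := Finset.card_union_add_card_inter (att G c {x}) (att G c {y})
  omega

/-- If the separated part `A` contains a vertex off the longest cycle, then many edges of the cycle
leave the other part. -/
lemma IsCut.two_mul_le_of_off (hcut : IsCut G A B S) (hc : IsMaxCycle G c) (hs : SparseOff G c)
    (h4 : KConnected G 4) (hδ : ∀ v, δ ≤ (nbr G v).card) (hS : S.card ≤ κ) (hκ : 4 ≤ κ)
    (hn : n + 2 * κ < 4 * δ) {z : V} (hzA : z ∈ A) (hz : Off c z) :
    2 * δ ≤ (outerEdges c B).card + (offPart c S).card := by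
  set Z := att G c {z} with hZ
  have hsub : ∀ k ∈ Z, k ∈ outerEdges c B ∧ k - 1 ∈ outerEdges c B :=
    fun k => hcut.mem_outerEdges_of_mem_att hzA
  have hcard := card_image_add Z (-1)
  by_cases hno : ∀ a, Off c a → ¬ G.Adj z a
  · have hcomp := isComp_singleton hz hno
    have hdeg : δ ≤ _ + Z.card := (hδ z).trans (card_nbr_le c z)
    rw [Finset.filter_eq_empty_iff.2 fun a ha h => hno a h (mem_nbr.1 ha), Finset.card_empty,
      zero_add] at hdeg
    have hd : Disjoint Z (Z.image (· + -1)) := by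
      rw [Finset.disjoint_left]
      intro k hk hk'
      obtain ⟨l, hl, rfl⟩ := Finset.mem_image.1 hk'
      exact hcomp.succ_notMem hc hk (by rwa [neg_add_cancel_right])
    have := Finset.card_le_card (s := Z ∪ Z.image (· + -1)) (t := outerEdges c B)
      (Finset.union_subset (fun k hk => (hsub k hk).1) fun k hk => by
        obtain ⟨l, hl, rfl⟩ := Finset.mem_image.1 hk
        simpa [sub_eq_add_neg] using (hsub l hl).2)
    rw [Finset.card_union_of_disjoint hd] at this
    omega
  push Not at hno
  obtain ⟨z', hz', hzz'⟩ := hno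
  have hoe : IsOffEdge G c z z' := ⟨hs, hzz', hz, hz'⟩
  set M := att G c {z} ∩ att G c {z'} with hM
  set X := M.filter fun k => k + 1 ∈ outerEdges c B with hX
  set Y := M.filter fun k => k + 1 ∉ outerEdges c B with hY
  have hXY : X.card + Y.card = M.card := Finset.card_filter_add_card_filter_not _
  have hMcard : 2 * κ ≤ M.card + 3 := hoe.two_mul_le_card_inter hc h4 hδ hn
  have hZcard : δ ≤ Z.card + 1 := hoe.le_card_att hδ
  have hMZ : M ⊆ Z := Finset.inter_subset_left
  have hout : 2 * Z.card + X.card ≤ (outerEdges c B).card := by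
    have hd : Disjoint Z (Z.image (· + -1)) := by
      rw [Finset.disjoint_left]
      intro k hk hk'
      obtain ⟨l, hl, rfl⟩ := Finset.mem_image.1 hk'
      exact hoe.succ_notMem hc (Finset.mem_union_left _ hk)
        (Finset.mem_union_left _ (by rwa [neg_add_cancel_right]))
    have hd' : Disjoint (Z ∪ Z.image (· + -1)) (X.image (· + 1)) := by
      rw [Finset.disjoint_right]
      intro k hk hk'
      obtain ⟨l, hl, rfl⟩ := Finset.mem_image.1 hk
      have hlM := (Finset.mem_filter.1 hl).1
      rcases Finset.mem_union.1 hk' with hk' | hk'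
      · exact hoe.succ_notMem hc (Finset.mem_union_left _ (hMZ hlM)) (Finset.mem_union_left _ hk')
      · obtain ⟨m, hm, hml⟩ := Finset.mem_image.1 hk'
        have : m = l + 2 := by linear_combination hml
        exact hoe.add_two_notMem hc hlM (Finset.mem_union_left _ (this ▸ hm))
    have := Finset.card_le_card (s := Z ∪ Z.image (· + -1) ∪ X.image (· + 1))
      (t := outerEdges c B)
      (Finset.union_subset (Finset.union_subset (fun k hk => (hsub k hk).1) fun k hk => by
        obtain ⟨l, hl, rfl⟩ := Finset.mem_image.1 hk
        simpa [sub_eq_add_neg] using (hsub l hl).2) fun k hk => by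
        obtain ⟨l, hl, rfl⟩ := Finset.mem_image.1 hk
        exact (Finset.mem_filter.1 hl).2)
    rw [Finset.card_union_of_disjoint hd', Finset.card_union_of_disjoint hd,
      card_image_add, card_image_add] at this
    omega
  by_contra hlt
  have hYsub : Y ⊆ posIn c S := by
    intro k hk
    obtain ⟨hkM, hk⟩ := Finset.mem_filter.1 hk
    rw [mem_outerEdges, not_not] at hk
    rw [mem_posIn]
    rcases hcut.cover (c k) with h | h | h
    · exact absurd (hc.adj k) (hcut.not_adj _ h _ hk.1)
    · exact absurd (mem_att_singleton.1 (hMZ hkM)).symm (hcut.not_adj _ hzA _ h)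
    · exact h
  have hYle := Finset.card_le_card hYsub
  have hSsplit := hc.card_posIn_add S
  have hYeq : Y = posIn c S := Finset.eq_of_subset_of_card_le hYsub (by omega)
  obtain ⟨i, hi⟩ : X.Nonempty := Finset.card_pos.1 (by omega)
  obtain ⟨j, hj⟩ : Y.Nonempty := Finset.card_pos.1 (by omega)
  have hYB : ∀ k ∈ Y, c (k + 1) ∈ B := by
    intro k hk
    have := (Finset.mem_filter.1 hk).2
    rw [mem_outerEdges, not_not] at this
    exact this.1
  obtain ⟨hiM, hi⟩ := Finset.mem_filter.1 hi
  have hiA : c i ∈ A := by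
    rcases hcut.cover (c i) with h | h | h
    · exact h
    · exact absurd (mem_att_singleton.1 (hMZ hiM)).symm (hcut.not_adj _ hzA _ h)
    · rw [← mem_posIn, ← hYeq] at h
      exact absurd hi (Finset.mem_filter.1 h).2
  refine forall_of_succ (p := fun k => c k ∉ A) (i := j + 1) ?_
    (fun h => Finset.disjoint_left.1 hcut.left_right h (hYB j hj)) i hiA
  intro k hk hk'
  rcases hcut.cover (c k) with h | h | h
  · exact hk h
  · exact hcut.not_adj _ hk' _ h (hc.adj k).symm
  · rw [← mem_posIn, ← hYeq] at h
    exact Finset.disjoint_left.1 hcut.left_right hk' (hYB k h)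

end OffCut

section Separator

variable {n : ℕ} [NeZero n]

lemma two_mul_card_add_le_of_gap {U M P : Finset (ZMod n)} (hU : U.Nonempty) (hM : M ⊆ U)
    (h2 : ∀ i ∈ U, 2 ≤ gap U i) (h3 : ∀ i ∈ M, 3 ≤ gap U i) :
    2 * U.card + M.card + (P \ U).card ≤
      n + (U.filter fun i => i + 1 ∈ P).card + (U.filter fun i => i - 1 ∈ P).card := by
  set β : ZMod n → ℕ := fun i =>
    ((Finset.range (gap U i)).filter fun t : ℕ => i + (t : ZMod n) ∈ P \ U).card with hβ
  have key : ∀ i ∈ U, 2 + (if i ∈ M then 1 else 0) + β i ≤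
      gap U i + (if i + 1 ∈ P then 1 else 0) + (if nx U i - 1 ∈ P then 1 else 0) := by
    intro i hi
    have hg := h2 i hi
    have hlast : i + ((gap U i - 1 : ℕ) : ZMod n) = nx U i - 1 := by
      rw [Nat.cast_sub (by omega), nx]
      push_cast
      ring
    have hsub : ((Finset.range (gap U i)).filter fun t : ℕ => i + (t : ZMod n) ∈ P \ U) ⊆
        Finset.Ico 2 (gap U i - 1) ∪ (if i + 1 ∈ P then {1} else ∅) ∪
          (if nx U i - 1 ∈ P then {gap U i - 1} else ∅) := by
      intro t ht
      rw [Finset.mem_filter, Finset.mem_range, Finset.mem_sdiff] at ht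
      obtain ⟨htg, htP, htU⟩ := ht
      have ht0 : t ≠ 0 := by
        rintro rfl
        simp [hi] at htU
      rw [Finset.mem_union, Finset.mem_union, Finset.mem_Ico]
      by_cases ht1 : t = 1
      · subst ht1
        have : i + 1 ∈ P := by simpa using htP
        simp [this]
      · by_cases ht2 : t = gap U i - 1
        · rw [ht2, hlast] at htP
          simp [htP, ht2]
        · left
          left
          omega
    have hcard : β i ≤ _ := Finset.card_le_card hsub
    by_cases hg3 : 3 ≤ gap U i
    · have h5 := hcard.trans ((Finset.card_union_le _ _).trans
        (Nat.add_le_add_right (Finset.card_union_le _ _) _))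
      rw [Nat.card_Ico] at h5
      split_ifs at h5 ⊢ <;> simp at h5 <;> omega
    · have hg2 : gap U i = 2 := by omega
      have hiM : i ∉ M := fun h => hg3 (h3 i h)
      have hnx : nx U i - 1 = i + 1 := by
        rw [← hlast, hg2]
        simp
      rw [hg2, hnx] at hcard
      rw [hg2, hnx]
      split_ifs at hcard ⊢ <;> simp at hcard <;> omega
  have hsum := Finset.sum_le_sum key
  simp only [Finset.sum_add_distrib, Finset.sum_const, smul_eq_mul] at hsum
  rw [Finset.sum_ite_mem, Finset.inter_eq_right.2 hM, ← Finset.card_filter, ← Finset.card_filter]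
    at hsum
  have h4 : (P \ U).card ≤ ∑ i ∈ U, β i := card_le_sum_gap hU _
  have h5 := gap_sum_le U
  have h6 : (U.filter fun i => nx U i - 1 ∈ P).card ≤ (U.filter fun i => i - 1 ∈ P).card := by
    refine Finset.card_le_card_of_injOn (nx U) ?_ fun i hi j hj =>
      nx_injOn hU (Finset.mem_filter.1 hi).1 (Finset.mem_filter.1 hj).1
    intro i hi
    have := Finset.mem_filter.1 hi
    exact Finset.mem_filter.2 ⟨(gap_spec hU i).2, this.2⟩
  simp only [Finset.sum_const, smul_eq_mul] at hsum
  omega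

variable {G : SimpleGraph V} {c : ZMod n → V} {A B S : Finset V} {δ κ : ℕ}
  {x y : V}

lemma IsCut.four_mul_le (hcut : IsCut G A B S) (hc : IsMaxCycle G c)
    (hA : 2 * δ ≤ (outerEdges c B).card + (offPart c S).card)
    (hB : 2 * δ ≤ (outerEdges c A).card + (offPart c S).card) : 4 * δ ≤ n + 2 * S.card := by
  have h1 := Finset.card_union_add_card_inter (outerEdges c A) (outerEdges c B)
  have h2 : (outerEdges c A ∪ outerEdges c B).card ≤ n := by
    simpa using Finset.card_le_univ (outerEdges c A ∪ outerEdges c B)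
  have h3 : outerEdges c A ∩ outerEdges c B ⊆ posIn c S ∪ (posIn c S).image (· + -1) := by
    intro k hk
    rw [Finset.mem_inter, mem_outerEdges, mem_outerEdges] at hk
    rw [Finset.mem_union]
    by_contra hcon
    push Not at hcon
    have hk1 : c (k + 1) ∉ S := fun h =>
      hcon.2 (Finset.mem_image.2 ⟨k + 1, mem_posIn.2 h, by simp⟩)
    rw [mem_posIn] at hcon
    have hadj := hc.adj k
    rcases hcut.cover (c k) with h | h | h
    · rcases hcut.cover (c (k + 1)) with h' | h' | h'
      · exact hk.1 ⟨h, h'⟩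
      · exact hcut.not_adj _ h _ h' hadj
      · exact hk1 h'
    · rcases hcut.cover (c (k + 1)) with h' | h' | h'
      · exact hcut.not_adj _ h' _ h hadj.symm
      · exact hk.2 ⟨h, h'⟩
      · exact hk1 h'
    · exact hcon.1 h
  have h4 := (Finset.card_le_card h3).trans (Finset.card_union_le _ _)
  rw [card_image_add] at h4
  have h5 := hc.card_posIn_add S
  omega

variable [Fintype V]

lemma IsCut.le_card_add (hcut : IsCut G A B S) (hδ : ∀ v, δ ≤ (nbr G v).card) {b : V} (hb : b ∈ B)
    {T : Finset V} (hT : T ⊆ S) (hbT : ∀ t ∈ T, ¬ G.Adj b t) :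
    δ + 1 + T.card ≤ B.card + S.card := by
  have hsub : nbr G b ⊆ (B.erase b) ∪ (S \ T) := by
    intro v hv
    rw [mem_nbr] at hv
    rw [Finset.mem_union, Finset.mem_erase, Finset.mem_sdiff]
    rcases hcut.cover v with h | h | h
    · exact absurd hv.symm (hcut.not_adj v h b hb)
    · exact Or.inl ⟨hv.ne', h⟩
    · exact Or.inr ⟨h, fun hvT => hbT v hvT hv⟩
  have h1 := (hδ b).trans ((Finset.card_le_card hsub).trans (Finset.card_union_le _ _))
  rw [Finset.card_erase_of_mem hb, Finset.card_sdiff_of_subset hT] at h1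
  have h2 := Finset.card_le_card hT
  have h3 : 1 ≤ B.card := Finset.card_pos.2 ⟨b, hb⟩
  omega

/-- The case of a separator with a part `B` left by few edges of the cycle, when an end of the off
edge lies in the other part. -/
lemma IsCut.bound_of_mem (hcut : IsCut G A B S) (hc : IsMaxCycle G c) (h : IsOffEdge G c x y)
    (h4 : KConnected G 4) (hδ : ∀ v, δ ≤ (nbr G v).card) (hS : S.card ≤ κ) (hκ : 4 ≤ κ)
    (hBne : B.Nonempty) (hB : ∀ b ∈ B, ¬ Off c b)
    (hs : ((att G c {x} ∪ att G c {y}).filter fun i => i + 1 ∈ posIn c B).card ≤ 1)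
    (hp : ((att G c {x} ∪ att G c {y}).filter fun i => i - 1 ∈ posIn c B).card ≤ 1)
    (hy : y ∈ A) : 4 * δ ≤ n + 2 * κ := by
  have hU := h.two_le_card hc h4
  have hcount := two_mul_card_add_le_of_gap (P := posIn c B) (Finset.card_pos.1 (by omega))
    (Finset.inter_subset_left.trans Finset.subset_union_left)
    (h.isComp.two_le_gap hc att_union_subset (h.two_le_card hc h4)) (h.three_le_gap hc h4)
  obtain ⟨b, hb⟩ := hBne
  have hBcard := hcut.le_card_add hδ hb (Finset.empty_subset S) (by simp)
  have hBpos := hc.card_posIn_add B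
  have hBoff : offPart c B = ∅ := Finset.filter_eq_empty_iff.2 hB
  rw [hBoff, Finset.card_empty] at hBpos
  rw [Finset.card_empty] at hBcard
  have hx1 := h.le_card_att hδ
  have hy1 := h.symm.le_card_att hδ
  have hUM := Finset.card_union_add_card_inter (att G c {x}) (att G c {y})
  have hd : Disjoint (att G c {y}) (posIn c B ∩ (att G c {x} ∪ att G c {y})) := by
    rw [Finset.disjoint_left]
    intro k hk hk'
    rw [Finset.mem_inter, mem_posIn] at hk'
    exact hcut.not_adj y hy _ hk'.1 (mem_att_singleton.1 hk).symm
  have hle := Finset.card_le_card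
    (Finset.union_subset (Finset.subset_union_right (s₁ := att G c {x}) (s₂ := att G c {y}))
    (Finset.inter_subset_right (s₁ := posIn c B) (s₂ := att G c {x} ∪ att G c {y})))
  rw [Finset.card_union_of_disjoint hd] at hle
  have hsplit := Finset.card_sdiff_add_card_inter (posIn c B) (att G c {x} ∪ att G c {y})
  omega

/-- The case of a separator with a part `B` left by few edges of the cycle, when the off edge lies
in the separator. -/
lemma IsCut.bound_of_subset (hcut : IsCut G A B S) (hc : IsMaxCycle G c) (h : IsOffEdge G c x y)
    (h4 : KConnected G 4) (hδ : ∀ v, δ ≤ (nbr G v).card) (hS : S.card ≤ κ)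
    (hAne : A.Nonempty) (hBne : B.Nonempty) (hB : ∀ b ∈ B, ¬ Off c b)
    (hs : ((att G c {x} ∪ att G c {y}).filter fun i => i + 1 ∈ posIn c B).card ≤ 1)
    (hp : ((att G c {x} ∪ att G c {y}).filter fun i => i - 1 ∈ posIn c B).card ≤ 1)
    (hx : x ∈ S) (hy : y ∈ S) : 4 * δ ≤ n + 2 * κ := by
  by_contra hn
  have hU := h.two_le_card hc h4
  have hcount := two_mul_card_add_le_of_gap (P := posIn c B) (Finset.card_pos.1 (by omega))
    (Finset.inter_subset_left.trans Finset.subset_union_left)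
    (h.isComp.two_le_gap hc att_union_subset (h.two_le_card hc h4)) (h.three_le_gap hc h4)
  have hBpos := hc.card_posIn_add B
  have hBoff : offPart c B = ∅ := Finset.filter_eq_empty_iff.2 hB
  rw [hBoff, Finset.card_empty] at hBpos
  have hx1 := h.le_card_att hδ
  have hy1 := h.symm.le_card_att hδ
  have hUM := Finset.card_union_add_card_inter (att G c {x}) (att G c {y})
  have hXU := Finset.card_le_card (Finset.subset_union_left (s₁ := att G c {x}) (s₂ := att G c {y}))
  have hcard := h.card_le hc h4
  have hxyS : ({x, y} : Finset V) ⊆ S := Finset.insert_subset hx (by simpa using hy)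
  have hSC : (posIn c S).card + 2 ≤ κ := by
    have h1 := hc.card_posIn_add S
    have h2 : ({x, y} : Finset V) ⊆ offPart c S := by
      refine Finset.insert_subset (mem_offPart.2 ⟨hx, h.left⟩) ?_
      rw [Finset.singleton_subset_iff]
      exact mem_offPart.2 ⟨hy, h.right⟩
    have h3 := Finset.card_le_card h2
    rw [Finset.card_pair h.adj.ne] at h3
    omega
  obtain ⟨k, hk⟩ : ∃ k, c k ∈ A := by
    by_contra hno
    push Not at hno
    obtain ⟨a, ha⟩ := hAne
    have hoff : Off c a := by
      rintro k rfl
      exact hno k ha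
    have h1 := (hδ a).trans (card_nbr_le c a)
    have h2 : ((nbr G a).filter (Off c)).card ≤ 1 := by
      rw [Finset.card_le_one]
      intro u hu v hv
      rw [Finset.mem_filter, mem_nbr] at hu hv
      exact h.sparse a u v hoff hu.2 hv.2 hu.1 hv.1
    have h3 : att G c {a} ⊆ posIn c S := by
      intro i hi
      rw [mem_att_singleton] at hi
      rw [mem_posIn]
      rcases hcut.cover (c i) with h' | h' | h'
      · exact absurd h' (hno i)
      · exact absurd hi.symm (hcut.not_adj a ha _ h')
      · exact h'
    have h5 := Finset.card_le_card h3
    omega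
  obtain ⟨b, hb⟩ := hBne
  obtain ⟨σ, hσ, hσB⟩ : ∃ σ ∈ posIn c S, c (σ - 1) ∉ B := by
    by_contra hno
    push Not at hno
    obtain ⟨l, hl⟩ : ∃ l, c l = b := by simpa [Off] using hB b hb
    have hlA := forall_of_succ (p := fun k => c k ∈ A) (i := k) ?_ hk l
    · exact Finset.disjoint_left.1 hcut.left_right hlA (hl ▸ hb)
    · intro i hi
      rcases hcut.cover (c (i + 1)) with h' | h' | h'
      · exact h'
      · exact absurd (hc.adj i) (hcut.not_adj _ hi _ h')
      · have := hno (i + 1) (mem_posIn.2 h')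
        rw [add_sub_cancel_right] at this
        exact absurd this (Finset.disjoint_left.1 hcut.left_right hi)
  have hj : (posIn c B ∩ (att G c {x} ∪ att G c {y})).card + 1 ≤
      ((att G c {x} ∪ att G c {y}).filter fun i => i + 1 ∈ posIn c B).card +
        (posIn c S).card := by
    have hsub : posIn c B ∩ (att G c {x} ∪ att G c {y}) ⊆
        ((att G c {x} ∪ att G c {y}).filter fun i => i + 1 ∈ posIn c B) ∪
          ((posIn c S).erase σ).image (· + -1) := by
      intro v hv
      obtain ⟨hvB, hvU⟩ := Finset.mem_inter.1 hv
      rw [mem_posIn] at hvB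
      rw [Finset.mem_union, Finset.mem_filter, mem_posIn]
      rcases hcut.cover (c (v + 1)) with h' | h' | h'
      · exact absurd (hc.adj v).symm (hcut.not_adj _ h' _ hvB)
      · exact Or.inl ⟨hvU, h'⟩
      · refine Or.inr (Finset.mem_image.2 ⟨v + 1, Finset.mem_erase.2 ⟨?_, mem_posIn.2 h'⟩,
          by simp⟩)
        rintro rfl
        rw [add_sub_cancel_right] at hσB
        exact hσB hvB
    have h1 := (Finset.card_le_card hsub).trans (Finset.card_union_le _ _)
    rw [card_image_add, Finset.card_erase_of_mem hσ] at h1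
    have := Finset.card_pos.2 ⟨σ, hσ⟩
    omega
  have hsplit := Finset.card_sdiff_add_card_inter (posIn c B) (att G c {x} ∪ att G c {y})
  by_cases he : ∃ i, i ∉ att G c {x} ∪ att G c {y} ∧ c i ∈ B
  · obtain ⟨i, hi, hiB⟩ := he
    have hBcard := hcut.le_card_add hδ hiB hxyS (by
      intro t ht hadj
      rw [Finset.mem_insert, Finset.mem_singleton] at ht
      rw [Finset.mem_union, mem_att_singleton, mem_att_singleton] at hi
      rcases ht with rfl | rfl
      · exact hi (Or.inl hadj)
      · exact hi (Or.inr hadj))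
    rw [Finset.card_pair h.adj.ne] at hBcard
    omega
  · push Not at he
    have hs0 : ((att G c {x} ∪ att G c {y}).filter fun i => i + 1 ∈ posIn c B) = ∅ :=
      Finset.filter_eq_empty_iff.2 fun i hi hiB =>
        he _ (h.succ_notMem hc hi) (mem_posIn.1 hiB)
    have hp0 : ((att G c {x} ∪ att G c {y}).filter fun i => i - 1 ∈ posIn c B) = ∅ :=
      Finset.filter_eq_empty_iff.2 fun i hi hiB =>
        he (i - 1) (fun hi' => h.succ_notMem hc hi' (by rwa [sub_add_cancel])) (mem_posIn.1 hiB)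
    have hBcard := hcut.le_card_add hδ hb (Finset.empty_subset S) (by simp)
    rw [Finset.card_empty] at hBcard
    rw [hs0, Finset.card_empty] at hcount hj
    rw [hp0, Finset.card_empty] at hcount
    omega

lemma IsCut.bound_of_lt (hcut : IsCut G A B S) (hc : IsMaxCycle G c) (h : IsOffEdge G c x y)
    (h4 : KConnected G 4) (hδ : ∀ v, δ ≤ (nbr G v).card) (hS : S.card ≤ κ) (hκ : 4 ≤ κ)
    (hAne : A.Nonempty) (hBne : B.Nonempty)
    (hbad : (outerEdges c A).card + (offPart c S).card < 2 * δ) : 4 * δ ≤ n + 2 * κ := by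
  by_contra hn
  have hB : ∀ b ∈ B, ¬ Off c b := fun b hb hoff => by
    have := hcut.symm.two_mul_le_of_off hc h.sparse h4 hδ hS hκ (by omega) hb hoff
    omega
  have hs : ((att G c {x} ∪ att G c {y}).filter fun i => i + 1 ∈ posIn c B).card ≤ 1 := by
    rw [Finset.card_le_one]
    intro i hi j hj
    rw [Finset.mem_filter, mem_posIn] at hi hj
    by_contra hij
    have := hcut.symm.two_mul_le_of_succ hc h.isComp hδ hB (att_union_subset hi.1) (att_union_subset hj.1)
      hij hi.2 hj.2
    omega
  have hp : ((att G c {x} ∪ att G c {y}).filter fun i => i - 1 ∈ posIn c B).card ≤ 1 := by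
    rw [Finset.card_le_one]
    intro i hi j hj
    rw [Finset.mem_filter, mem_posIn] at hi hj
    by_contra hij
    have := hcut.symm.two_mul_le_of_pred hc h.isComp hδ hB (att_union_subset hi.1) (att_union_subset hj.1)
      hij hi.2 hj.2
    omega
  rcases hcut.cover x with hx | hx | hx
  · rw [Finset.union_comm] at hs hp
    exact hn (hcut.bound_of_mem hc h.symm h4 hδ hS hκ hBne hB hs hp hx)
  · exact hB x hx h.left
  · rcases hcut.cover y with hy | hy | hy
    · exact hn (hcut.bound_of_mem hc h h4 hδ hS hκ hBne hB hs hp hy)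
    · exact hB y hy h.right
    · exact hn (hcut.bound_of_subset hc h h4 hδ hS hAne hBne hB hs hp hx hy)

/-- If the longest cycle misses an edge and every vertex off the cycle has at most one neighbour
off the cycle, then the cycle is long. -/
lemma IsCut.bound (hcut : IsCut G A B S) (hc : IsMaxCycle G c) (h : IsOffEdge G c x y)
    (h4 : KConnected G 4) (hδ : ∀ v, δ ≤ (nbr G v).card) (hS : S.card ≤ κ) (hκ : 4 ≤ κ)
    (hAne : A.Nonempty) (hBne : B.Nonempty) : 4 * δ ≤ n + 2 * κ := by
  rcases lt_or_ge ((outerEdges c A).card + (offPart c S).card) (2 * δ) with hB | hB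
  · exact hcut.bound_of_lt hc h h4 hδ hS hκ hAne hBne hB
  rcases lt_or_ge ((outerEdges c B).card + (offPart c S).card) (2 * δ) with hA | hA
  · exact hcut.symm.bound_of_lt hc h h4 hδ hS hκ hBne hAne hA
  · have := hcut.four_mul_le hc hA hB
    omega

end Separator

section Components

variable {G : SimpleGraph V} {n : ℕ} {c : ZMod n → V} {H : Finset V}

lemma ConnSet.insert (h : ConnSet G H) {a b : V} (ha : a ∈ H) (hab : G.Adj a b) :
    ConnSet G (insert b H) := by
  refine ⟨⟨b, by simp⟩, fun T hT hne hcl => ?_⟩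
  by_cases hTH : (T ∩ H).Nonempty
  · have := h.2 (T ∩ H) Finset.inter_subset_right hTH fun u hu v hv huv =>
      Finset.mem_inter.2 ⟨hcl u (Finset.mem_inter.1 hu).1 v (Finset.mem_insert_of_mem hv) huv, hv⟩
    have hHT : H ⊆ T := Finset.inter_eq_right.1 this
    exact Finset.Subset.antisymm hT (Finset.insert_subset (hcl a (hHT ha) b (by simp) hab) hHT)
  · rw [Finset.not_nonempty_iff_eq_empty, ← Finset.disjoint_iff_inter_eq_empty] at hTH
    obtain ⟨t, ht⟩ := hne
    have htb : t = b := (Finset.mem_insert.1 (hT ht)).resolve_right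
      (Finset.disjoint_left.1 hTH ht)
    subst htb
    exact absurd ha (Finset.disjoint_left.1 hTH (hcl t ht a (Finset.mem_insert_of_mem ha) hab.symm))

variable [Fintype V]

lemma exists_isComp {z : V} (hz : Off c z) : ∃ H, IsComp G c H ∧ z ∈ H := by
  obtain ⟨H, hH, hmax⟩ := Finset.exists_max_image
    (Finset.univ.filter fun H : Finset V => ConnSet G H ∧ z ∈ H ∧ ∀ k, c k ∉ H) Finset.card
    ⟨{z}, by
      rw [Finset.mem_filter]
      refine ⟨Finset.mem_univ _, ⟨⟨z, by simp⟩, fun T hT hne _ =>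
        (Finset.subset_singleton_iff.1 hT).resolve_left hne.ne_empty⟩, by simp,
        fun k hk => hz k (by simpa using hk)⟩⟩
  obtain ⟨-, hconn, hzH, hoff⟩ := Finset.mem_filter.1 hH
  refine ⟨H, ⟨hconn, hoff, fun a ha b hab => ?_⟩, hzH⟩
  by_contra hcon
  push Not at hcon
  have := hmax (insert b H) (by
    rw [Finset.mem_filter]
    refine ⟨Finset.mem_univ _, hconn.insert ha hab, Finset.mem_insert_of_mem hzH, fun k hk => ?_⟩
    rcases Finset.mem_insert.1 hk with hk | hk
    · exact hcon.2 k hk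
    · exact hoff k hk)
  rw [Finset.card_insert_of_notMem hcon.1] at this
  omega

variable [NeZero n] {δ : ℕ}

lemma bound_of_not_sparseOff (hc : IsMaxCycle G c) (h4 : KConnected G 4)
    (hδ : ∀ v, δ ≤ (nbr G v).card) (hs : ¬ SparseOff G c) : 4 * δ ≤ n + 8 := by
  simp only [SparseOff, not_forall] at hs
  obtain ⟨z, a, b, hz, ha, hb, hza, hzb, hab⟩ := hs
  obtain ⟨H, hH, hzH⟩ := exists_isComp (G := G) hz
  have haH : a ∈ H := (hH.closed z hzH a hza).resolve_right fun ⟨k, hk⟩ => ha k hk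
  have hbH : b ∈ H := (hH.closed z hzH b hzb).resolve_right fun ⟨k, hk⟩ => hb k hk
  have h3 : 3 ≤ H.card := by
    rw [← Finset.card_eq_three.2 ⟨z, a, b, hza.ne, hzb.ne, hab, rfl⟩]
    refine Finset.card_le_card fun v hv => ?_
    simp only [Finset.mem_insert, Finset.mem_singleton] at hv
    rcases hv with rfl | rfl | rfl <;> assumption
  by_cases h2 : ∀ v ∈ H, ConnSet G (H.erase v)
  · exact hH.bound_of_two_connected hc h4 hδ h3 h2
  · push Not at h2
    obtain ⟨v, hv, hcut⟩ := h2
    exact hH.bound_of_cut_vertex hc h4 hδ hv h3 hcut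

/-- A longest cycle of a `4`-connected graph missing an edge is long. -/
lemma IsMaxCycle.bound (hc : IsMaxCycle G c) (h4 : KConnected G 4)
    (hδ : ∀ v, δ ≤ (nbr G v).card) {x y : V} (hxy : G.Adj x y) (hx : Off c x) (hy : Off c y) :
    4 * δ ≤ n + 2 * connectivity G := by
  have hκ := le_connectivity h4
  by_cases hs : SparseOff G c
  · have h : IsOffEdge G c x y := ⟨hs, hxy, hx, hy⟩
    rcases exists_min_cut G with hV | ⟨A, B, S, hA, hB, hAB, hAS, hBS, hcov, hS, hno⟩
    · have h1 := h.card_le hc h4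
      have h2 := h.le_card_att hδ
      have h3 := h.symm.le_card_att hδ
      have h5 := Finset.card_union_add_card_inter (att G c {x}) (att G c {y})
      have h6 := Finset.card_le_card
        (Finset.subset_union_left (s₁ := att G c {x}) (s₂ := att G c {y}))
      have h7 : nbr G x ⊆ Finset.univ.erase x := fun v hv =>
        Finset.mem_erase.2 ⟨(mem_nbr.1 hv).ne', Finset.mem_univ v⟩
      have h8 := (hδ x).trans (Finset.card_le_card h7)
      rw [Finset.card_erase_of_mem (Finset.mem_univ x), Finset.card_univ] at h8
      omega
    · refine IsCut.bound ⟨hAB, hAS, hBS, fun v => ?_, hno⟩ hc h h4 hδ hS hκ hA hB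
      have := Finset.mem_univ v
      rw [← hcov, Finset.mem_union, Finset.mem_union, or_assoc] at this
      exact this
  · have := bound_of_not_sparseOff hc h4 hδ hs
    omega

end Components

end LongestCycle

theorem nikoghosyan_2011_dominating (G : SimpleGraph V) [Fintype V] [DecidableRel G.Adj]
    (h4 : KConnected G 4) :
    (circumference G : ℤ) ≥ 4 * G.minDegree - 2 * connectivity G ∨
      ∃ (v : V) (w : G.Walk v v), IsDominatingCycle w := by
  obtain ⟨n, _, c, l, hc, hl, rfl, hcl⟩ := LongestCycle.exists_isMaxCycle h4 (by omega)
  by_cases hdom : ∀ x y, G.Adj x y → ¬ (LongestCycle.Off c x ∧ LongestCycle.Off c y)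
  · right
    obtain ⟨v, w, hw, -, hsupp⟩ := hl.exists_walk
    refine ⟨v, w, hw, fun x y hxy => ?_⟩
    have hoff : ∀ z, ¬ LongestCycle.Off c z → z ∈ w.support := by
      intro z hz
      simp only [LongestCycle.Off, not_forall, not_not] at hz
      obtain ⟨k, rfl⟩ := hz
      exact hsupp _ (hcl k)
    exact (not_and_or.1 (hdom x y hxy)).imp (hoff x) (hoff y)
  · left
    push Not at hdom
    obtain ⟨x, y, hxy, hx, hy⟩ := hdom
    have hδ : ∀ v, G.minDegree ≤ (LongestCycle.nbr G v).card := by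
      intro v
      refine (G.minDegree_le_degree v).trans_eq ?_
      rw [← G.card_neighborFinset_eq_degree]
      congr 1
      ext u
      simp
    have h1 := hc.bound h4 hδ hxy hx hy
    have h2 := LongestCycle.length_le_circumference hl
    omega
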